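/- arXiv:1606.06878 — 2 statements merged into one kernel-verified Lean document; each statement's English description precedes it below -/
import Mathlib

section
/- Let d ≥ 1, let ω ∈ ℝ^d be nonresonant, and let h : ℝ × ℝ^d → ℝ be real analytic and 2π-periodic in each of the last d coordinates. Let h₀(x) = (2π)^{−d} ∫_{[0,2π]^d} h(x,ψ) dψ, and assume c₀ ∈ ℝ is a simple zero of h₀ (i.e. h₀(c₀) = 0 and h₀'(c₀) ≠ 0). Then there exists ε₀ > 0 such that for every ε with 0 < |ε| < ε₀ there is a function X_ε : ℝ^d → ℝ, real analytic and 2π-periodic in each coordinate, such that the function x(t) = c₀ + X_ε(ωt) satisfies ε x''(t) + x'(t) + ε h(x(t), ωt) = 0 for all t ∈ ℝ; moreover sup_{ψ∈ℝ^d} |X_ε(ψ)| → 0 as ε → 0. -/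
open MeasureTheory Filter

open scoped BoundedContinuousFunction Topology


lemma rs_exists_neg (l : ℝ) (hl : l < 0) (f : ℝ →ᵇ ℝ) :
    ∃ y : ℝ →ᵇ ℝ, (∀ t, HasDerivAt y (l * y t + f t) t) ∧ ‖y‖ ≤ ‖f‖ / |l| := by
  have hl' : 0 < -l := by linarith
  set G : ℝ → ℝ := fun s => Real.exp (-l * s) * f s with hG
  have hGc : Continuous G := by fun_prop
  have hexp : ∀ t, IntegrableOn (fun s => Real.exp (-l * s)) (Set.Iic t) := fun t =>
    integrableOn_exp_mul_Iic hl' t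
  have hle : ∀ s, ‖G s‖ ≤ ‖f‖ * Real.exp (-l * s) := by
    intro s
    rw [hG]; simp only [norm_mul, Real.norm_eq_abs, Real.abs_exp]
    rw [mul_comm]
    exact mul_le_mul_of_nonneg_right (f.norm_coe_le_norm s) (Real.exp_pos _).le
  have hint : ∀ t, IntegrableOn G (Set.Iic t) := by
    intro t
    refine Integrable.mono' ((hexp t).const_mul ‖f‖) hGc.aestronglyMeasurable ?_
    exact Eventually.of_forall hle
  set J : ℝ → ℝ := fun t => ∫ s in Set.Iic t, G s with hJ
  have hJd : ∀ t, HasDerivAt J (G t) t := by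
    intro t
    have h1 : J = fun t => (∫ s in (0:ℝ)..t, G s) + J 0 := by
      funext t
      have := intervalIntegral.integral_Iic_sub_Iic (hint 0) (hint t)
      simp only [hJ]; linarith
    rw [h1]
    exact (intervalIntegral.integral_hasDerivAt_right (hGc.intervalIntegrable _ _)
      (hGc.stronglyMeasurableAtFilter _ _) hGc.continuousAt).add_const _
  have hJb : ∀ t, ‖J t‖ ≤ ‖f‖ * (Real.exp (-l * t) / (-l)) := by
    intro t
    rw [← integral_exp_mul_Iic hl' t, ← integral_const_mul]
    exact norm_integral_le_of_norm_le ((hexp t).const_mul ‖f‖) (Eventually.of_forall hle)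
  set y : ℝ → ℝ := fun t => Real.exp (l * t) * J t with hy
  have hyd : ∀ t, HasDerivAt y (l * y t + f t) t := by
    intro t
    have h1 : HasDerivAt (fun t => Real.exp (l * t)) (Real.exp (l * t) * (l * 1)) t :=
      ((hasDerivAt_id t).const_mul l).exp
    have h2 := h1.mul (hJd t)
    refine HasDerivAt.congr_deriv (f := y) h2 ?_
    have h3 : Real.exp (l * t) * Real.exp (-l * t) = 1 := by
      rw [← Real.exp_add]; simp
    simp only [hy, hG]
    linear_combination (f t) * h3
  have hyb : ∀ t, ‖y t‖ ≤ ‖f‖ / |l| := by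
    intro t
    simp only [hy, norm_mul, Real.norm_eq_abs (Real.exp _), Real.abs_exp]
    calc _ ≤ Real.exp (l * t) * (‖f‖ * (Real.exp (-l * t) / (-l))) :=
          mul_le_mul_of_nonneg_left (hJb t) (Real.exp_pos _).le
      _ = (Real.exp (l * t) * Real.exp (-l * t)) * (‖f‖ / (-l)) := by ring
      _ = _ := by rw [← Real.exp_add, abs_of_neg hl]; simp
  refine ⟨BoundedContinuousFunction.ofNormedAddCommGroup y
    (continuous_iff_continuousAt.2 fun t => (hyd t).continuousAt) _ hyb, hyd, ?_⟩
  exact BoundedContinuousFunction.norm_ofNormedAddCommGroup_le _ (by positivity) hyb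

lemma rs_exists (l : ℝ) (hl : l ≠ 0) (f : ℝ →ᵇ ℝ) :
    ∃ y : ℝ →ᵇ ℝ, (∀ t, HasDerivAt y (l * y t + f t) t) ∧ ‖y‖ ≤ ‖f‖ / |l| := by
  rcases lt_or_gt_of_ne hl with h | h
  · exact rs_exists_neg l h f
  · let n : C(ℝ, ℝ) := ⟨fun t => -t, continuous_neg⟩
    obtain ⟨z, hz, hzb⟩ := rs_exists_neg (-l) (by linarith) (f.compContinuous n)
    refine ⟨-(z.compContinuous n), fun t => ?_, ?_⟩
    · have h1 := ((hz (-t)).scomp t (hasDerivAt_neg t)).neg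
      refine HasDerivAt.congr_deriv (f := ⇑(-(z.compContinuous n))) h1 ?_
      simp [n]
    · rw [norm_neg]
      have e1 : ‖z.compContinuous n‖ ≤ ‖z‖ :=
        (BoundedContinuousFunction.norm_le (norm_nonneg _)).2 fun t => z.norm_coe_le_norm _
      have e2 : ‖f.compContinuous n‖ ≤ ‖f‖ :=
        (BoundedContinuousFunction.norm_le (norm_nonneg _)).2 fun t => f.norm_coe_le_norm _
      rw [abs_neg] at hzb
      exact e1.trans (hzb.trans (by gcongr))

lemma rs_unique_zero (l : ℝ) (hl : l ≠ 0) (y : ℝ →ᵇ ℝ)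
    (hy : ∀ t, HasDerivAt y (l * y t) t) : y = 0 := by
  set q : ℝ → ℝ := fun t => y t * Real.exp (-l * t) with hq
  have hqd : ∀ t, HasDerivAt q 0 t := by
    intro t
    have h1 : HasDerivAt (fun t => Real.exp (-l * t)) (Real.exp (-l * t) * (-l * 1)) t :=
      ((hasDerivAt_id t).const_mul (-l)).exp
    refine HasDerivAt.congr_deriv (f := q) ((hy t).mul h1) ?_
    ring
  have hconst : ∀ s t, q s = q t := fun s t =>
    is_const_of_deriv_eq_zero (fun t => (hqd t).differentiableAt) (fun t => (hqd t).deriv) s t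
  have hlim : Tendsto (fun x : ℝ => ‖y‖ * Real.exp (-x)) atTop (𝓝 0) := by
    simpa using Real.tendsto_exp_neg_atTop_nhds_zero.const_mul ‖y‖
  ext t
  have hb : ∀ x : ℝ, ‖q t‖ ≤ ‖y‖ * Real.exp (-x) := by
    intro x
    rw [hconst t (x / l)]
    simp only [hq, norm_mul, Real.norm_eq_abs (Real.exp _), Real.abs_exp]
    have : -l * (x / l) = -x := by field_simp
    rw [this]
    exact mul_le_mul_of_nonneg_right (y.norm_coe_le_norm _) (Real.exp_pos _).le
  have h0 : ‖q t‖ ≤ 0 := ge_of_tendsto' hlim hb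
  have h1 : q t = 0 := norm_le_zero_iff.1 h0
  simpa [hq, (Real.exp_pos _).ne'] using h1

lemma rs_unique (l : ℝ) (hl : l ≠ 0) (f y z : ℝ →ᵇ ℝ)
    (hy : ∀ t, HasDerivAt y (l * y t + f t) t) (hz : ∀ t, HasDerivAt z (l * z t + f t) t) :
    y = z := by
  rw [← sub_eq_zero]
  refine rs_unique_zero l hl _ fun t => ?_
  refine HasDerivAt.congr_deriv ((hy t).sub (hz t)) ?_
  simp; ring

/-- The resolvent: bounded solution of `y' = l y + f`. -/
lemma rs_resolvent (l : ℝ) (hl : l ≠ 0) :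
    ∃ R : (ℝ →ᵇ ℝ) →L[ℝ] (ℝ →ᵇ ℝ),
      (∀ f t, HasDerivAt (R f) (l * R f t + f t) t) ∧ (∀ f, ‖R f‖ ≤ ‖f‖ / |l|) := by
  choose R hR hRb using rs_exists l hl
  refine ⟨LinearMap.mkContinuous
    { toFun := R
      map_add' := ?_
      map_smul' := ?_ } (1 / |l|) ?_, hR, hRb⟩
  · intro f g
    refine rs_unique l hl (f + g) _ _ (hR _) fun t => ?_
    refine HasDerivAt.congr_deriv ((hR f t).add (hR g t)) ?_
    simp; ring
  · intro c f
    refine rs_unique l hl (c • f) _ _ (hR _) fun t => ?_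
    refine HasDerivAt.congr_deriv ((hR f t).const_mul c) ?_
    simp; ring
  · intro f
    rw [div_mul_eq_mul_div, one_mul]; exact hRb f

/-- Roots. -/
lemma rs_roots (a e : ℝ) (he : e ≠ 0) (hae : 4 * e ^ 2 * |a| ≤ 1) (ha : a ≠ 0) :
    ∃ l₁ l₂ : ℝ, l₁ ≠ 0 ∧ l₂ ≠ 0 ∧ l₁ * l₂ = a ∧ e * (l₁ + l₂) = -1 ∧
      1 / |l₂| ≤ 2 * |e| := by
  have h1 : 0 ≤ 1 - 4 * e ^ 2 * a := by
    have := mul_le_mul_of_nonneg_left (le_abs_self a) (by positivity : 0 ≤ 4 * e ^ 2)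
    linarith
  set s := Real.sqrt (1 - 4 * e ^ 2 * a) with hs
  have hs0 : 0 ≤ s := Real.sqrt_nonneg _
  have hss : s * s = 1 - 4 * e ^ 2 * a := Real.mul_self_sqrt h1
  refine ⟨(-1 + s) / (2 * e), (-1 - s) / (2 * e), ?_, ?_, ?_, ?_, ?_⟩
  · intro h
    have : s = 1 := by
      field_simp at h; linarith
    rw [this] at hss
    have : e ^ 2 * a = 0 := by linarith
    simp [he, ha] at this
  · have : -1 - s ≠ 0 := by linarith
    positivity
  · field_simp; nlinarith
  · field_simp; ring
  · have h3 : |(-1 - s) / (2 * e)| = (1 + s) / (2 * |e|) := by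
      rw [abs_div, abs_mul, abs_two, show -1 - s = -(1 + s) by ring, abs_neg,
        abs_of_nonneg (by linarith : (0:ℝ) ≤ 1 + s)]
    have he' : 0 < |e| := abs_pos.2 he
    rw [h3, one_div_div, div_le_iff₀ (by linarith)]
    nlinarith

/-- The Green operator of `e y'' + y' + e a y = e f`. -/
lemma rs_green (a e : ℝ) (he : e ≠ 0) (hae : 4 * e ^ 2 * |a| ≤ 1) (ha : a ≠ 0) :
    ∃ A : (ℝ →ᵇ ℝ) →L[ℝ] (ℝ →ᵇ ℝ),
      (∀ f, ‖A f‖ ≤ ‖f‖ / |a|) ∧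
      (∀ f, ∃ D D2 : ℝ →ᵇ ℝ, (∀ t, HasDerivAt (A f) (D t) t) ∧ (∀ t, HasDerivAt D (D2 t) t) ∧
        ‖D‖ ≤ 4 * |e| * ‖f‖ ∧ ∀ t, e * D2 t + D t + e * a * A f t = e * f t) ∧
      (∀ P p : ℝ →ᵇ ℝ, (∀ t, HasDerivAt P (p t) t) → ‖A p‖ ≤ 4 * |e| * ‖P‖) ∧
      (∀ (f g : ℝ →ᵇ ℝ) (s : ℝ), (∀ t, g t = f (t + s)) → ∀ t, A g t = A f (t + s)) := by
  obtain ⟨l₁, l₂, h1, h2, hprod, hsum, hl2⟩ := rs_roots a e he hae ha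
  obtain ⟨R₁, hR₁, hb₁⟩ := rs_resolvent l₁ h1
  obtain ⟨R₂, hR₂, hb₂⟩ := rs_resolvent l₂ h2
  have hl1' : 0 < |l₁| := abs_pos.2 h1
  have hl2' : 0 < |l₂| := abs_pos.2 h2
  have hb2' : ∀ f, ‖R₂ f‖ ≤ 2 * |e| * ‖f‖ := by
    intro f
    refine (hb₂ f).trans ?_
    rw [div_eq_mul_one_div, mul_comm]
    gcongr
  have hD : ∀ f : ℝ →ᵇ ℝ, ‖l₁ • R₁ f + f‖ ≤ 2 * ‖f‖ := by
    intro f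
    have : ‖l₁ • R₁ f‖ ≤ ‖f‖ := by
      rw [norm_smul, Real.norm_eq_abs]
      calc _ ≤ |l₁| * (‖f‖ / |l₁|) := by gcongr; exact hb₁ f
        _ = ‖f‖ := by field_simp
    exact (norm_add_le _ _).trans (by linarith)
  have hshift : ∀ (l : ℝ) (hl : l ≠ 0) (R : (ℝ →ᵇ ℝ) →L[ℝ] (ℝ →ᵇ ℝ))
      (hR : ∀ f t, HasDerivAt (R f) (l * R f t + f t) t) (f g : ℝ →ᵇ ℝ) (s : ℝ),
      (∀ t, g t = f (t + s)) → ∀ t, R g t = R f (t + s) := by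
    intro l hl R hR f g s hfg t
    let n : C(ℝ, ℝ) := ⟨fun t => t + s, by fun_prop⟩
    have : R g = (R f).compContinuous n := by
      refine rs_unique l hl g _ _ (hR g) fun t => ?_
      have := (hR f (t + s)).comp_add_const t s
      rw [hfg]; exact this
    rw [this]; rfl
  refine ⟨R₁.comp R₂, ?_, ?_, ?_, ?_⟩
  · intro f
    calc ‖R₁ (R₂ f)‖ ≤ ‖R₂ f‖ / |l₁| := hb₁ _
      _ ≤ (‖f‖ / |l₂|) / |l₁| := by gcongr; exact hb₂ f
      _ = ‖f‖ / |a| := by rw [← hprod, abs_mul]; field_simp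
  · intro f
    refine ⟨l₁ • R₁ (R₂ f) + R₂ f, l₁ • (l₁ • R₁ (R₂ f) + R₂ f) + (l₂ • R₂ f + f), ?_, ?_, ?_, ?_⟩
    · intro t; exact hR₁ (R₂ f) t
    · intro t
      exact ((hR₁ (R₂ f) t).const_mul l₁).add (hR₂ f t)
    · refine (hD _).trans ?_
      have := hb2' f
      linarith
    · intro t
      simp
      linear_combination (- e * R₁ (R₂ f) t) * hprod + (l₁ * R₁ (R₂ f) t + R₂ f t) * hsum
  · intro P p hPp
    have hcomm : R₁ (R₂ p) = R₂ (R₁ p) := by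
      refine rs_unique l₁ h1 (R₂ p) _ _ (hR₁ _) fun t => ?_
      have : R₂ (l₁ • R₁ p + p) = l₂ • R₂ (R₁ p) + R₁ p := by
        refine rs_unique l₂ h2 (l₁ • R₁ p + p) _ _ (hR₂ _) fun t => ?_
        exact ((hR₂ (R₁ p) t).const_mul l₂).add (hR₁ p t)
      have h3 := hR₂ (R₁ p) t
      have h4 := DFunLike.congr_fun this t
      simp at h4
      rw [h4]; exact h3
    have h3 : R₁ p = l₁ • R₁ P + P := by
      refine rs_unique l₁ h1 p _ _ (hR₁ _) fun t => ?_
      exact ((hR₁ P t).const_mul l₁).add (hPp t)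
    show ‖R₁ (R₂ p)‖ ≤ _
    rw [hcomm, h3]
    refine (hb2' _).trans ?_
    have := mul_le_mul_of_nonneg_left (hD P) (by positivity : 0 ≤ 2 * |e|)
    linarith
  · intro f g s hfg t
    exact hshift l₁ h1 R₁ hR₁ _ _ s (hshift l₂ h2 R₂ hR₂ _ _ s hfg) t


/-- The projection of `ℝ^d` to the unit torus, with period `2π`. -/
noncomputable def rsProj (d : ℕ) (ψ : Fin d → ℝ) : UnitAddTorus (Fin d) :=
  fun i => ((ψ i / (2 * Real.pi) : ℝ) : UnitAddCircle)

lemma rsProj_continuous (d : ℕ) : Continuous (rsProj d) := by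
  unfold rsProj
  refine continuous_pi fun i => ?_
  exact (AddCircle.continuous_mk' 1).comp (by fun_prop)

lemma rs_mFourier (d : ℕ) (n : Fin d → ℤ) (ψ : Fin d → ℝ) :
    UnitAddTorus.mFourier n (rsProj d ψ) =
      ∏ i, Complex.exp (Complex.I * ((n i : ℝ) * ψ i : ℝ)) := by
  unfold UnitAddTorus.mFourier rsProj
  simp only [ContinuousMap.coe_mk]
  refine Finset.prod_congr rfl fun i _ => ?_
  rw [fourier_coe_apply]
  congr 1
  have : (Real.pi : ℂ) ≠ 0 := by exact_mod_cast Real.pi_ne_zero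
  push_cast
  field_simp

/-- Averages. -/
noncomputable def rsMean (d : ℕ) (F : C(UnitAddTorus (Fin d), ℂ)) : ℂ :=
  (((2 * Real.pi) ^ d)⁻¹ : ℝ) * ∫ ψ in Set.Icc (0 : Fin d → ℝ) (fun _ => 2 * Real.pi), F (rsProj d ψ)

lemma rs_integrable (d : ℕ) (F : C(UnitAddTorus (Fin d), ℂ)) :
    IntegrableOn (fun ψ => F (rsProj d ψ)) (Set.Icc (0 : Fin d → ℝ) (fun _ => 2 * Real.pi)) :=
  (F.continuous.comp (rsProj_continuous d)).continuousOn.integrableOn_compact isCompact_Icc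

lemma rsMean_add (d : ℕ) (F F' : C(UnitAddTorus (Fin d), ℂ)) :
    rsMean d (F + F') = rsMean d F + rsMean d F' := by
  unfold rsMean
  rw [← mul_add, ← integral_add (rs_integrable d F) (rs_integrable d F')]; rfl

lemma rsMean_smul (d : ℕ) (c : ℂ) (F : C(UnitAddTorus (Fin d), ℂ)) :
    rsMean d (c • F) = c * rsMean d F := by
  unfold rsMean
  rw [mul_left_comm c, ← integral_const_mul c]; rfl

lemma rsMean_norm (d : ℕ) (F : C(UnitAddTorus (Fin d), ℂ)) : ‖rsMean d F‖ ≤ ‖F‖ := by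
  unfold rsMean
  have hv : (volume (Set.Icc (0 : Fin d → ℝ) (fun _ => 2 * Real.pi))).toReal = (2 * Real.pi) ^ d := by
    rw [Real.volume_Icc_pi_toReal]
    · simp
    · intro i; simp; positivity
  have h1 := norm_setIntegral_le_of_norm_le_const (μ := volume)
    (s := Set.Icc (0 : Fin d → ℝ) (fun _ => 2 * Real.pi)) (f := fun ψ => F (rsProj d ψ)) (C := ‖F‖)
    isCompact_Icc.measure_lt_top (fun ψ _ => F.norm_coe_le_norm _)
  rw [measureReal_def, hv] at h1
  rw [norm_mul, Complex.norm_real, Real.norm_of_nonneg (by positivity)]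
  rw [inv_mul_le_iff₀ (by positivity)]
  linarith

lemma rsMean_mFourier_zero (d : ℕ) : rsMean d (UnitAddTorus.mFourier (0 : Fin d → ℤ)) = 1 := by
  have hv : (volume (Set.Icc (0 : Fin d → ℝ) (fun _ => 2 * Real.pi))).toReal = (2 * Real.pi) ^ d := by
    rw [Real.volume_Icc_pi_toReal]
    · simp
    · intro i; simp; positivity
  unfold rsMean
  simp [UnitAddTorus.mFourier_zero, measureReal_def, hv]

lemma rs_integral_exp (k : ℤ) (hk : k ≠ 0) :
    ∫ x in Set.Icc (0:ℝ) (2 * Real.pi), Complex.exp (Complex.I * ((k : ℝ) * x : ℝ)) = 0 := by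
  rw [integral_Icc_eq_integral_Ioc, ← intervalIntegral.integral_of_le (by positivity)]
  have hk' : Complex.I * (k : ℂ) ≠ 0 := by simp [hk]
  have := integral_exp_mul_complex (a := 0) (b := 2 * Real.pi) hk'
  have h2 : ∀ x : ℝ, Complex.exp (Complex.I * ((k : ℝ) * x : ℝ)) =
      Complex.exp (Complex.I * (k : ℂ) * x) := by
    intro x; congr 1; push_cast; ring
  simp_rw [h2, this]
  have h3 : Complex.exp (Complex.I * k * ((2 * Real.pi : ℝ) : ℂ)) = 1 := by
    rw [← Complex.exp_int_mul_two_pi_mul_I k]; congr 1; push_cast; ring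
  rw [h3]; simp

lemma rsMean_mFourier (d : ℕ) (n : Fin d → ℤ) (hn : n ≠ 0) :
    rsMean d (UnitAddTorus.mFourier n) = 0 := by
  obtain ⟨j, hj⟩ := Function.ne_iff.1 hn
  unfold rsMean
  simp_rw [rs_mFourier]
  rw [← Set.pi_univ_Icc, volume_pi, Measure.restrict_pi_pi,
    integral_fintype_prod_eq_prod (fun i x => Complex.exp (Complex.I * ((n i : ℝ) * x : ℝ)))]
  rw [Finset.prod_eq_zero (Finset.mem_univ j) (rs_integral_exp (n j) hj), mul_zero]

/-- Approximation by derivatives along the flow. -/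
def RsApprox (d : ℕ) (ω : Fin d → ℝ) (F : C(UnitAddTorus (Fin d), ℂ)) : Prop :=
  ∀ δ > (0:ℝ), ∃ M : ℝ, ∀ θ : Fin d → ℝ, ∃ P p : ℝ →ᵇ ℂ, (∀ t, HasDerivAt P (p t) t) ∧ ‖P‖ ≤ M ∧
    ∀ t, ‖F (rsProj d (θ + t • ω)) - rsMean d F - p t‖ ≤ δ

lemma rsApprox_mFourier (d : ℕ) (ω : Fin d → ℝ)
    (hω : ∀ ν : Fin d → ℤ, ν ≠ 0 → (∑ i, ω i * (ν i : ℝ)) ≠ 0) (n : Fin d → ℤ) :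
    RsApprox d ω (UnitAddTorus.mFourier n) := by
  intro δ hδ
  by_cases hn : n = 0
  · subst hn
    refine ⟨0, fun θ => ⟨0, 0, fun t => ?_, by simp, fun t => ?_⟩⟩
    · exact hasDerivAt_const t (0:ℂ)
    · rw [rsMean_mFourier_zero, UnitAddTorus.mFourier_zero]
      simp [hδ.le]
  · set s := ∑ i, ω i * (n i : ℝ) with hs
    have hs0 : s ≠ 0 := hω n hn
    refine ⟨1 / |s|, fun θ => ?_⟩
    set k := ∑ i, (n i : ℝ) * θ i with hk
    have hval : ∀ t : ℝ, UnitAddTorus.mFourier n (rsProj d (θ + t • ω)) =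
        Complex.exp (Complex.I * (k + s * t : ℝ)) := by
      intro t
      rw [rs_mFourier, ← Complex.exp_sum, ← Finset.mul_sum, ← Complex.ofReal_sum]
      congr 3
      rw [hk, hs, Finset.sum_mul, ← Finset.sum_add_distrib]
      refine Finset.sum_congr rfl fun i _ => ?_
      simp; ring
    have hnorm : ∀ t : ℝ, ‖Complex.exp (Complex.I * (k + s * t : ℝ))‖ = 1 := by
      intro t; rw [mul_comm, Complex.norm_exp_ofReal_mul_I]
    have hsC : (s : ℂ) ≠ 0 := by exact_mod_cast hs0
    let p : ℝ →ᵇ ℂ := BoundedContinuousFunction.ofNormedAddCommGroup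
      (fun t : ℝ => Complex.exp (Complex.I * (k + s * t : ℝ))) (by fun_prop) 1
      (fun t => (hnorm t).le)
    refine ⟨(1 / (Complex.I * s)) • p, p, fun t => ?_, ?_, fun t => ?_⟩
    · have h0 : HasDerivAt (fun t : ℝ => Complex.I * ((k + s * t : ℝ) : ℂ)) (Complex.I * s) t := by
        have h1 : HasDerivAt (fun t : ℝ => k + s * t) s t := by
          simpa using ((hasDerivAt_id t).const_mul s).const_add k
        exact h1.ofReal_comp.const_mul Complex.I
      have h2 := h0.cexp.const_mul (1 / (Complex.I * s))
      refine HasDerivAt.congr_deriv (f := ⇑((1 / (Complex.I * (s:ℂ))) • p)) h2 ?_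
      simp only [p, BoundedContinuousFunction.coe_ofNormedAddCommGroup]
      field_simp [Complex.I_ne_zero]
    · rw [norm_smul]
      have hp : ‖p‖ ≤ 1 := BoundedContinuousFunction.norm_ofNormedAddCommGroup_le _ zero_le_one _
      have : ‖1 / (Complex.I * (s:ℂ))‖ = 1 / |s| := by simp
      rw [this]
      exact mul_le_of_le_one_right (by positivity) hp
    · rw [rsMean_mFourier d n hn, hval]
      simp [p, hδ.le]

lemma rsApprox_all (d : ℕ) (ω : Fin d → ℝ)
    (hω : ∀ ν : Fin d → ℤ, ν ≠ 0 → (∑ i, ω i * (ν i : ℝ)) ≠ 0)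
    (F : C(UnitAddTorus (Fin d), ℂ)) : RsApprox d ω F := by
  have hspan : ∀ F ∈ Submodule.span ℂ (Set.range (UnitAddTorus.mFourier (d := Fin d))),
      RsApprox d ω F := by
    intro F hF
    induction hF using Submodule.span_induction with
    | mem x hx => obtain ⟨n, rfl⟩ := hx; exact rsApprox_mFourier d ω hω n
    | zero =>
      intro δ hδ
      refine ⟨0, fun θ => ⟨0, 0, fun t => hasDerivAt_const t (0:ℂ), by simp, fun t => ?_⟩⟩
      simp [rsMean, hδ.le]
    | add x y _ _ hx hy =>
      intro δ hδ
      obtain ⟨M, hM⟩ := hx (δ / 2) (by positivity)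
      obtain ⟨M', hM'⟩ := hy (δ / 2) (by positivity)
      refine ⟨M + M', fun θ => ?_⟩
      obtain ⟨P, p, h1, h2, h3⟩ := hM θ
      obtain ⟨P', p', h1', h2', h3'⟩ := hM' θ
      refine ⟨P + P', p + p', fun t => (h1 t).add (h1' t),
        (norm_add_le _ _).trans (by linarith), fun t => ?_⟩
      rw [rsMean_add]
      have e : (x + y) (rsProj d (θ + t • ω)) - (rsMean d x + rsMean d y) - (p + p') t =
        (x (rsProj d (θ + t • ω)) - rsMean d x - p t) +
        (y (rsProj d (θ + t • ω)) - rsMean d y - p' t) := by simp; ring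
      rw [e]
      exact (norm_add_le _ _).trans (by linarith [h3 t, h3' t])
    | smul c x _ hx =>
      intro δ hδ
      obtain ⟨M, hM⟩ := hx (δ / (‖c‖ + 1)) (by positivity)
      refine ⟨‖c‖ * M, fun θ => ?_⟩
      obtain ⟨P, p, h1, h2, h3⟩ := hM θ
      refine ⟨c • P, c • p, fun t => (h1 t).const_mul c, ?_, fun t => ?_⟩
      · rw [norm_smul]; gcongr
      rw [rsMean_smul]
      have e : (c • x) (rsProj d (θ + t • ω)) - (c * rsMean d x) - (c • p) t =
        c * (x (rsProj d (θ + t • ω)) - rsMean d x - p t) := by simp; ring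
      rw [e, norm_mul]
      calc _ ≤ ‖c‖ * (δ / (‖c‖ + 1)) := by gcongr; exact h3 t
        _ ≤ (‖c‖ + 1) * (δ / (‖c‖ + 1)) := by gcongr; linarith
        _ = δ := by field_simp
  have hF : F ∈ (Submodule.span ℂ (Set.range (UnitAddTorus.mFourier (d := Fin d)))).topologicalClosure := by
    rw [UnitAddTorus.span_mFourier_closure_eq_top]; trivial
  intro δ hδ
  obtain ⟨F', hF', hd⟩ := Metric.mem_closure_iff.1 hF (δ / 3) (by positivity)
  obtain ⟨M, hM⟩ := hspan F' hF' (δ / 3) (by positivity)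
  refine ⟨M, fun θ => ?_⟩
  obtain ⟨P, p, h1, h2, h3⟩ := hM θ
  refine ⟨P, p, h1, h2, fun t => ?_⟩
  rw [dist_eq_norm] at hd
  have e1 : ‖(F - F') (rsProj d (θ + t • ω))‖ ≤ δ / 3 := ((F - F').norm_coe_le_norm _).trans hd.le
  have e2 : ‖rsMean d (F - F')‖ ≤ δ / 3 := (rsMean_norm d _).trans hd.le
  have e3 : rsMean d F = rsMean d (F - F') + rsMean d F' := by rw [← rsMean_add]; simp
  have e : F (rsProj d (θ + t • ω)) - rsMean d F - p t = (F - F') (rsProj d (θ + t • ω))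
    - rsMean d (F - F') + (F' (rsProj d (θ + t • ω)) - rsMean d F' - p t) := by
    rw [e3]; simp; ring
  rw [e]
  refine (norm_add_le _ _).trans ?_
  have := norm_sub_le ((F - F') (rsProj d (θ + t • ω))) (rsMean d (F - F'))
  linarith [h3 t]

lemma rs_per_int (d : ℕ) (G : (Fin d → ℝ) → ℝ)
    (hper : ∀ ψ i, G (ψ + Pi.single i (2 * Real.pi)) = G ψ) (n : Fin d → ℤ) :
    ∀ ψ, G (ψ + fun i => n i * (2 * Real.pi)) = G ψ := by
  have h1 : ∀ (i : Fin d) (m : ℕ) ψ, G (ψ + Pi.single i (m * (2 * Real.pi))) = G ψ := by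
    intro i m
    induction m with
    | zero => intro ψ; simp
    | succ m ih =>
      intro ψ
      rw [← ih ψ]
      refine Eq.trans ?_ (hper _ i)
      rw [add_assoc, ← Pi.single_add]
      congr 3; push_cast; ring
  have h2 : ∀ (i : Fin d) (m : ℤ) ψ, G (ψ + Pi.single i (m * (2 * Real.pi))) = G ψ := by
    intro i m ψ
    obtain ⟨k, rfl | rfl⟩ := m.eq_nat_or_neg
    · simpa using h1 i k ψ
    · rw [← h1 i k (ψ + _), add_assoc, ← Pi.single_add]; simp
  have h3 : ∀ (S : Finset (Fin d)) ψ,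
      G (ψ + ∑ i ∈ S, Pi.single i (n i * (2 * Real.pi))) = G ψ := by
    intro S
    induction S using Finset.induction_on with
    | empty => intro ψ; simp
    | insert i S hi ih =>
      intro ψ
      rw [Finset.sum_insert hi, ← add_assoc, ih, h2]
  intro ψ
  have := h3 Finset.univ ψ
  rwa [Finset.univ_sum_single (fun i => (n i : ℝ) * (2 * Real.pi))] at this

lemma rs_lift (d : ℕ) (G : (Fin d → ℝ) → ℝ) (hG : Continuous G)
    (hper : ∀ ψ i, G (ψ + Pi.single i (2 * Real.pi)) = G ψ) :
    ∃ F : C(UnitAddTorus (Fin d), ℂ), ∀ ψ, F (rsProj d ψ) = G ψ := by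
  have hq : IsOpenQuotientMap (fun (x : Fin d → ℝ) (i : Fin d) => ((x i : ℝ) : UnitAddCircle)) :=
    IsOpenQuotientMap.piMap (fun _ => QuotientAddGroup.isOpenQuotientMap_mk)
  have hcomp : Continuous (fun x : Fin d → ℝ => (G (fun i => 2 * Real.pi * x i) : ℂ)) := by
    fun_prop
  let g : C(Fin d → ℝ, ℂ) := ⟨_, hcomp⟩
  let q : C(Fin d → ℝ, UnitAddTorus (Fin d)) := ⟨_, hq.continuous⟩
  have hfac : Function.FactorsThrough g q := by
    intro x y hxy
    have h1 : ∀ i, ∃ n : ℤ, y i = x i + n := by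
      intro i
      have := congrFun hxy i
      obtain ⟨n, hn⟩ := (QuotientAddGroup.eq_iff_sub_mem.1 this)
      refine ⟨-n, ?_⟩
      simp at hn; push_cast; linarith
    choose n hn using h1
    have h2 := rs_per_int d G hper n (fun i => 2 * Real.pi * x i)
    show (G _ : ℂ) = (G _ : ℂ)
    rw [← h2]
    congr 2
    funext i
    simp only [Pi.add_apply, hn i]; ring
  refine ⟨Topology.IsQuotientMap.lift (f := q) hq.isQuotientMap g hfac, fun ψ => ?_⟩
  have h3 : rsProj d ψ = q (fun i => ψ i / (2 * Real.pi)) := rfl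
  have h4 := Topology.IsQuotientMap.lift_comp (f := q) hq.isQuotientMap g hfac
  rw [h3]
  have h5 := DFunLike.congr_fun h4 (fun i => ψ i / (2 * Real.pi))
  refine h5.trans ?_
  show (G _ : ℂ) = (G _ : ℂ)
  congr 2
  funext i; field_simp

lemma rs_averaging (d : ℕ) (ω : Fin d → ℝ)
    (hω : ∀ ν : Fin d → ℤ, ν ≠ 0 → (∑ i, ω i * (ν i : ℝ)) ≠ 0)
    (G : (Fin d → ℝ) → ℝ) (hG : Continuous G)
    (hper : ∀ ψ i, G (ψ + Pi.single i (2 * Real.pi)) = G ψ)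
    (hmean : ∫ ψ in Set.Icc (0 : Fin d → ℝ) (fun _ => 2 * Real.pi), G ψ = 0) (δ : ℝ) (hδ : 0 < δ) :
    ∃ M : ℝ, ∀ θ : Fin d → ℝ, ∃ P p : ℝ →ᵇ ℝ, (∀ t, HasDerivAt P (p t) t) ∧ ‖P‖ ≤ M ∧
      ∀ t, |G (θ + t • ω) - p t| ≤ δ := by
  obtain ⟨F, hF⟩ := rs_lift d G hG hper
  have hm : rsMean d F = 0 := by
    unfold rsMean
    simp_rw [hF]
    rw [integral_complex_ofReal, hmean]; simp
  obtain ⟨M, hM⟩ := rsApprox_all d ω hω F δ hδ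
  refine ⟨M, fun θ => ?_⟩
  obtain ⟨P, p, h1, h2, h3⟩ := hM θ
  refine ⟨Complex.reCLM.compLeftContinuousBounded ℝ P, Complex.reCLM.compLeftContinuousBounded ℝ p,
    fun t => ?_, ?_, fun t => ?_⟩
  · exact Complex.reCLM.hasFDerivAt.comp_hasDerivAt t (h1 t)
  · refine (BoundedContinuousFunction.norm_le ((norm_nonneg _).trans h2)).2 fun t => ?_
    exact (Complex.abs_re_le_norm _).trans ((P.norm_coe_le_norm t).trans h2)
  · have := h3 t
    rw [hm, hF, sub_zero] at this
    refine le_trans ?_ this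
    have e := Complex.abs_re_le_norm ((G (θ + t • ω) : ℂ) - p t)
    simpa using e

open scoped Nat in
/-- Uniform analyticity at a point. -/
def RsGood {V : Type*} [NormedAddCommGroup V] [NormedSpace ℝ V] (H : V → ℝ) (r C : ℝ) (q : V) :
    Prop :=
  (∀ n, ‖iteratedFDeriv ℝ n H q‖ ≤ (n ! : ℝ) * (C * (r⁻¹) ^ n)) ∧
  ∀ v, ‖v‖ < r → HasSum (fun n => (n ! : ℝ)⁻¹ • iteratedFDeriv ℝ n H q (fun _ => v)) (H (q + v))

lemma rsGood_mono {V : Type*} [NormedAddCommGroup V] [NormedSpace ℝ V] (H : V → ℝ) {r C r' C' : ℝ}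
    (hr' : 0 < r') (hr : r' ≤ r) (hC : C ≤ C') (hC0 : 0 ≤ C) {q : V} (h : RsGood H r C q) :
    RsGood H r' C' q := by
  refine ⟨fun n => (h.1 n).trans ?_, fun v hv => h.2 v (hv.trans_le hr)⟩
  have : r⁻¹ ≤ r'⁻¹ := by gcongr
  have hr0 : 0 ≤ r⁻¹ := by have := hr'.trans_le hr; positivity
  have hC0' : 0 ≤ C' := hC0.trans hC
  gcongr

lemma rs_sigma_le {β : ℕ → Type*} (f : (Σ k, β k) → NNReal) (hf : Summable f) (k : ℕ) :
    ∑' s : β k, f ⟨k, s⟩ ≤ ∑' s, f s :=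
  NNReal.tsum_comp_le_tsum_of_inj hf sigma_mk_injective

lemma rs_local {V : Type*} [NormedAddCommGroup V] [NormedSpace ℝ V] (H : V → ℝ) (p : V)
    (hH : AnalyticAt ℝ H p) :
    ∃ r > 0, ∃ C ≥ 0, ∀ q ∈ Metric.ball p r, RsGood H r C q := by
  obtain ⟨P, R, hP⟩ := hH
  obtain ⟨ρ, hρ0, hρR⟩ := ENNReal.lt_iff_exists_nnreal_btwn.1 hP.r_pos
  have hρ0' : 0 < ρ := by exact_mod_cast hρ0
  set r : NNReal := ρ / 2 with hr
  have hr0 : 0 < r := by positivity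
  have hrr : (r + r : ENNReal) < R := by
    rw [← ENNReal.coe_add, hr, add_halves]; exact hρR
  have hsum := P.changeOriginSeries_summable_aux₁ (hrr.trans_le hP.r_le)
  set S := ∑' s : Σ k l : ℕ, { s : Finset (Fin (k + l)) // s.card = l },
      ‖P (s.1 + s.2.1)‖₊ * r ^ s.2.1 * r ^ s.1 with hS
  refine ⟨r, hr0, S, S.2, fun q hq => ?_⟩
  have hx : ‖q - p‖₊ < r := by
    rw [Metric.mem_ball, dist_eq_norm] at hq; exact_mod_cast hq
  have hxR : (‖q - p‖₊ : ENNReal) < R := by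
    refine lt_trans (ENNReal.coe_lt_coe.2 hx) (lt_of_le_of_lt ?_ hrr)
    exact le_self_add
  have hPq := hP.changeOrigin hxR
  rw [add_sub_cancel] at hPq
  have hrad : (r : ENNReal) ≤ R - ‖q - p‖₊ := by
    refine le_trans ?_ (tsub_le_tsub_left (ENNReal.coe_le_coe.2 hx.le) R)
    exact ENNReal.le_sub_of_add_le_left ENNReal.coe_ne_top hrr.le
  have hbound : ∀ k, ‖P.changeOrigin (q - p) k‖ ≤ S * ((r : ℝ)⁻¹) ^ k := by
    intro k
    have h1 := P.nnnorm_changeOrigin_le k (hxR.trans_le hP.r_le)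
    have hrR : (r : ENNReal) < P.radius :=
      lt_of_le_of_lt le_self_add (hrr.trans_le hP.r_le)
    have h2 : ∑' s : Σ l : ℕ, { s : Finset (Fin (k + l)) // s.card = l },
        ‖P (k + s.1)‖₊ * ‖q - p‖₊ ^ s.1 ≤ ∑' s : Σ l : ℕ, { s : Finset (Fin (k + l)) // s.card = l },
        ‖P (k + s.1)‖₊ * r ^ s.1 := by
      refine Summable.tsum_le_tsum (fun s => ?_)
        (P.changeOriginSeries_summable_aux₂ (hxR.trans_le hP.r_le) k)
        (P.changeOriginSeries_summable_aux₂ hrR k)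
      gcongr
    have h3 : (∑' s : Σ l : ℕ, { s : Finset (Fin (k + l)) // s.card = l },
        ‖P (k + s.1)‖₊ * r ^ s.1) * r ^ k ≤ S := by
      rw [← NNReal.tsum_mul_right]
      exact rs_sigma_le _ hsum k
    have h5 : ‖P.changeOrigin (q - p) k‖₊ * r ^ k ≤ S :=
      (mul_le_mul_left (h1.trans h2) _).trans h3
    have h6 : ‖P.changeOrigin (q - p) k‖ * (r : ℝ) ^ k ≤ S := by exact_mod_cast h5
    rw [inv_pow, ← div_eq_mul_inv, le_div_iff₀ (by positivity)]
    exact h6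
  refine ⟨fun n => ?_, fun v hv => ?_⟩
  · refine ContinuousMultilinearMap.opNorm_le_bound (by positivity) fun m => ?_
    rw [hPq.iteratedFDeriv_eq_sum_of_completeSpace]
    refine (norm_sum_le _ _).trans ?_
    have : ∀ σ ∈ (Finset.univ : Finset (Equiv.Perm (Fin n))),
        ‖P.changeOrigin (q - p) n (fun i => m (σ i))‖ ≤ S * ((r : ℝ)⁻¹) ^ n * ∏ i, ‖m i‖ := by
      intro σ _
      refine (ContinuousMultilinearMap.le_opNorm _ _).trans ?_
      rw [Equiv.prod_comp σ (fun i => ‖m i‖)]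
      gcongr
      exact hbound n
    refine (Finset.sum_le_sum this).trans (le_of_eq ?_)
    rw [Finset.sum_const, Finset.card_univ, Fintype.card_perm, Fintype.card_fin, nsmul_eq_mul]
    ring
  · refine hPq.hasSum_iteratedFDeriv ?_
    rw [Metric.mem_eball, edist_zero_right]
    refine lt_of_lt_of_le ?_ hrad
    rw [← ofReal_norm, ← ENNReal.ofReal_coe_nnreal]
    exact (ENNReal.ofReal_lt_ofReal_iff (by exact_mod_cast hr0)).2 hv

lemma rs_exists_shift (d : ℕ) (ψ : Fin d → ℝ) : ∃ n : Fin d → ℤ,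
    (ψ + fun i => (n i : ℝ) * (2 * Real.pi)) ∈ Set.Icc (0 : Fin d → ℝ) (fun _ => 2 * Real.pi) := by
  refine ⟨fun i => -toIcoDiv Real.two_pi_pos 0 (ψ i), ?_⟩
  rw [← Set.pi_univ_Icc]
  intro i _
  have h := toIcoMod_mem_Ico Real.two_pi_pos 0 (ψ i)
  rw [toIcoMod] at h
  simp only [zsmul_eq_mul, zero_add] at h
  constructor
  · have := h.1
    simp only [Pi.zero_apply, Pi.add_apply, Int.cast_neg]
    linarith
  · have := h.2
    simp only [Pi.add_apply, Int.cast_neg]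
    linarith

lemma rs_uniform (d : ℕ) (H : ℝ × (Fin d → ℝ) → ℝ) (hH : ∀ p, AnalyticAt ℝ H p)
    (hper : ∀ (n : Fin d → ℤ) p, H (p + (0, fun i => (n i : ℝ) * (2 * Real.pi))) = H p) (ρ : ℝ) :
    ∃ r > 0, ∃ C ≥ 0, ∀ q : ℝ × (Fin d → ℝ), |q.1| ≤ ρ → RsGood H r C q := by
  have hK : IsCompact (Set.Icc (-ρ) ρ ×ˢ Set.Icc (0 : Fin d → ℝ) (fun _ => 2 * Real.pi)) :=
    isCompact_Icc.prod isCompact_Icc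
  have key : ∃ r > 0, ∃ C ≥ 0, ∀ q ∈ (Set.Icc (-ρ) ρ ×ˢ Set.Icc (0 : Fin d → ℝ)
      (fun _ => 2 * Real.pi)), RsGood H r C q := by
    refine hK.induction_on (p := fun s => ∃ r > 0, ∃ C ≥ 0, ∀ q ∈ s, RsGood H r C q) ?_ ?_ ?_ ?_
    · exact ⟨1, one_pos, 0, le_rfl, by simp⟩
    · rintro s t hst ⟨r, hr, C, hC, h⟩
      exact ⟨r, hr, C, hC, fun q hq => h q (hst hq)⟩
    · rintro s t ⟨r, hr, C, hC, h⟩ ⟨r', hr', C', hC', h'⟩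
      refine ⟨min r r', lt_min hr hr', max C C', le_max_of_le_left hC, ?_⟩
      rintro q (hq | hq)
      · exact rsGood_mono H (lt_min hr hr') (min_le_left _ _) (le_max_left _ _) hC (h q hq)
      · exact rsGood_mono H (lt_min hr hr') (min_le_right _ _) (le_max_right _ _) hC' (h' q hq)
    · intro x _
      obtain ⟨r, hr, C, hC, h⟩ := rs_local H x (hH x)
      exact ⟨_, mem_nhdsWithin_of_mem_nhds (Metric.ball_mem_nhds x hr), r, hr, C, hC, h⟩
  obtain ⟨r, hr, C, hC, h⟩ := key
  refine ⟨r, hr, C, hC, fun q hq => ?_⟩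
  obtain ⟨n, hn⟩ := rs_exists_shift d q.2
  set τ : ℝ × (Fin d → ℝ) := (0, fun i => (n i : ℝ) * (2 * Real.pi)) with hτ
  have h1 := h (q + τ) ⟨by simpa [hτ] using abs_le.1 hq, by simpa [hτ] using hn⟩
  have hH' : (fun z => H (z + τ)) = H := funext (hper n)
  have hD : ∀ k, iteratedFDeriv ℝ k H (q + τ) = iteratedFDeriv ℝ k H q := by
    intro k
    rw [← iteratedFDeriv_comp_add_right k τ q, hH']
  refine ⟨fun k => ?_, fun v hv => ?_⟩
  · rw [← hD]; exact h1.1 k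
  · have h2 := h1.2 v hv
    simp_rw [hD] at h2
    rwa [add_right_comm, hper] at h2

lemma rs_nemytskii (d : ℕ) (ω : Fin d → ℝ) (H : ℝ × (Fin d → ℝ) → ℝ) (hH : ∀ p, AnalyticAt ℝ H p)
    (hper : ∀ (n : Fin d → ℤ) p, H (p + (0, fun i => (n i : ℝ) * (2 * Real.pi))) = H p)
    (N : (Fin d → ℝ) × (ℝ →ᵇ ℝ) → (ℝ →ᵇ ℝ))
    (hN : ∀ x t, N x t = H (x.2 t, x.1 + t • ω)) (x₀ : (Fin d → ℝ) × (ℝ →ᵇ ℝ)) :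
    AnalyticAt ℝ N x₀ := by
  obtain ⟨r, hr, C, hC, hgood⟩ := rs_uniform d H hH hper ‖x₀.2‖
  set w : ℝ → ℝ × (Fin d → ℝ) := fun t => (x₀.2 t, x₀.1 + t • ω) with hw
  have hwc : Continuous w := by fun_prop
  have hwg : ∀ t, RsGood H r C (w t) := fun t => hgood _ (x₀.2.norm_coe_le_norm t)
  let J : ℝ → ((Fin d → ℝ) × (ℝ →ᵇ ℝ)) → ℝ × (Fin d → ℝ) := fun t x => (x.2 t, x.1)
  have hJ : ∀ t x, ‖J t x‖ ≤ ‖x‖ := by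
    intro t x
    refine max_le ?_ (le_max_left _ _)
    exact (x.2.norm_coe_le_norm t).trans (le_max_right _ _)
  have hHc : ContDiff ℝ ⊤ H := contDiff_iff_contDiffAt.2 fun p => (hH p).contDiffAt
  have hcont : ∀ n, Continuous fun t => iteratedFDeriv ℝ n H (w t) := fun n =>
    (hHc.continuous_iteratedFDeriv (m := n) le_top).comp hwc
  have hb : ∀ (n : ℕ) (v : Fin n → (Fin d → ℝ) × (ℝ →ᵇ ℝ)) (t : ℝ),
      ‖((Nat.factorial n : ℝ))⁻¹ * iteratedFDeriv ℝ n H (w t) (fun i => J t (v i))‖ ≤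
        (C * (r⁻¹) ^ n) * ∏ i, ‖v i‖ := by
    intro n v t
    rw [norm_mul, norm_inv, Real.norm_natCast, inv_mul_le_iff₀ (by positivity)]
    refine (ContinuousMultilinearMap.le_opNorm _ _).trans ?_
    rw [← mul_assoc]
    have h1 := (hwg t).1 n
    gcongr with i
    exact hJ t (v i)
  have hcont2 : ∀ (n : ℕ) (v : Fin n → (Fin d → ℝ) × (ℝ →ᵇ ℝ)),
      Continuous fun t => ((Nat.factorial n : ℝ))⁻¹ *
        iteratedFDeriv ℝ n H (w t) (fun i => J t (v i)) := by
    intro n v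
    refine continuous_const.mul ?_
    refine (hcont n).eval ?_
    refine continuous_pi fun i => ?_
    simp only [J]
    fun_prop
  have hJadd : ∀ t x y, J t (x + y) = J t x + J t y := fun t x y => rfl
  have hJsmul : ∀ t (c : ℝ) x, J t (c • x) = c • J t x := fun t c x => rfl
  let P : FormalMultilinearSeries ℝ ((Fin d → ℝ) × (ℝ →ᵇ ℝ)) (ℝ →ᵇ ℝ) := fun n =>
    MultilinearMap.mkContinuous
      { toFun := fun v => BoundedContinuousFunction.ofNormedAddCommGroup _ (hcont2 n v) _ (hb n v)
        map_update_add' := by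
          intro inst v i x y
          ext t
          have e : ∀ z, (fun j => J t (Function.update v i z j)) =
              Function.update (fun j => J t (v j)) i (J t z) := by
            intro z; funext j
            by_cases hj : j = i
            · subst hj; simp
            · simp [hj]
          simp only [BoundedContinuousFunction.coe_ofNormedAddCommGroup,
            BoundedContinuousFunction.coe_add, Pi.add_apply]
          rw [e, e, e, hJadd, ContinuousMultilinearMap.map_update_add]
          ring
        map_update_smul' := by
          intro inst v i c x
          ext t
          have e : ∀ z, (fun j => J t (Function.update v i z j)) =
              Function.update (fun j => J t (v j)) i (J t z) := by
            intro z; funext j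
            by_cases hj : j = i
            · subst hj; simp
            · simp [hj]
          simp only [BoundedContinuousFunction.coe_ofNormedAddCommGroup,
            BoundedContinuousFunction.coe_smul]
          rw [e, e, hJsmul, ContinuousMultilinearMap.map_update_smul]
          simp only [smul_eq_mul]
          ring }
      (C * (r⁻¹) ^ n) (fun v => BoundedContinuousFunction.norm_ofNormedAddCommGroup_le _
        (by positivity) (hb n v))
  have hPn : ∀ n, ‖P n‖ ≤ C * (r⁻¹) ^ n := fun n =>
    MultilinearMap.mkContinuous_norm_le _ (by positivity) _
  have hPapp : ∀ n (v : Fin n → (Fin d → ℝ) × (ℝ →ᵇ ℝ)) t, P n v t =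
      ((Nat.factorial n : ℝ))⁻¹ * iteratedFDeriv ℝ n H (w t) (fun i => J t (v i)) :=
    fun n v t => rfl
  refine ⟨P, ENNReal.ofReal r, ?_, by simpa using hr, ?_⟩
  · refine P.le_radius_of_bound C fun n => ?_
    rw [Real.coe_toNNReal _ hr.le]
    calc _ ≤ (C * (r⁻¹) ^ n) * r ^ n := by gcongr; exact hPn n
      _ = C := by rw [mul_assoc, ← mul_pow, inv_mul_cancel₀ hr.ne']; simp
  · intro y hy
    have hy' : ‖y‖ < r := by
      rw [Metric.mem_eball, edist_zero_right, ← ofReal_norm] at hy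
      exact (ENNReal.ofReal_lt_ofReal_iff hr).1 hy
    have hsum : Summable fun n => P n (fun _ => y) := by
      refine Summable.of_norm_bounded (g := fun n => C * (r⁻¹ * ‖y‖) ^ n) ?_ fun n => ?_
      · refine (summable_geometric_of_lt_one (by positivity) ?_).mul_left C
        rw [inv_mul_lt_iff₀ hr]; linarith
      · refine (ContinuousMultilinearMap.le_opNorm _ _).trans ?_
        rw [Finset.prod_const, Finset.card_univ, Fintype.card_fin, mul_pow, ← mul_assoc]
        gcongr
        exact hPn n
    obtain ⟨S, hS⟩ := hsum
    have : S = N (x₀ + y) := by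
      ext t
      have h1 : HasSum (fun n => P n (fun _ => y) t) (S t) :=
        hS.mapL (BoundedContinuousFunction.evalCLM ℝ t)
      have h2 := (hwg t).2 (J t y) ((hJ t y).trans_lt hy')
      have h3 := h1.unique h2
      rw [h3, hN]
      congr 1
      simp only [hw, J, Prod.mk_add_mk, Prod.snd_add, Prod.fst_add,
        BoundedContinuousFunction.coe_add, Pi.add_apply]
      congr 1
      abel
    rw [← this]; exact hS


lemma rs_fixed (A : (ℝ →ᵇ ℝ) →L[ℝ] (ℝ →ᵇ ℝ)) (α B η κ r : ℝ) (hα : 0 ≤ α) (hη : 0 ≤ η) (hκ : 0 ≤ κ)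
    (hr : 0 < r)
    (b g : ℝ →ᵇ ℝ) (Q : (ℝ →ᵇ ℝ) → (ℝ →ᵇ ℝ))
    (hA : ∀ f, ‖A f‖ ≤ α * ‖f‖) (hb : ‖b‖ ≤ B) (hAbA : ∀ v, ‖A (b * A v)‖ ≤ η * ‖v‖)
    (hQ0 : Q 0 = 0)
    (hQ : ∀ u v, ‖u‖ ≤ r → ‖v‖ ≤ r → ‖Q u - Q v‖ ≤ κ * ‖u - v‖)
    (h1 : η * (B + κ) + α * κ ≤ 1 / 2) (h2 : (1 + α * B) * ‖A g‖ ≤ r / 4) :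
    (∃ u, ‖u‖ ≤ 2 * ((1 + α * B) * ‖A g‖) ∧ u = -A (g + b * u + Q u)) ∧
    (∀ u v, ‖u‖ ≤ r → ‖v‖ ≤ r → u = -A (g + b * u + Q u) → v = -A (g + b * v + Q v) → u = v) := by
  have hB : 0 ≤ B := (norm_nonneg _).trans hb
  let Φ₁ : (ℝ →ᵇ ℝ) → (ℝ →ᵇ ℝ) := fun u => -A (g + b * u + Q u)
  let Φ : (ℝ →ᵇ ℝ) → (ℝ →ᵇ ℝ) := fun u => -A (g + b * Φ₁ u + Q u)
  have hlip : ∀ u v, ‖u‖ ≤ r → ‖v‖ ≤ r → ‖Φ u - Φ v‖ ≤ 1 / 2 * ‖u - v‖ := by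
    intro u v hu hv
    have hq := hQ u v hu hv
    have e : Φ u - Φ v = A (b * A (b * (u - v) + (Q u - Q v))) - A (Q u - Q v) := by
      simp only [Φ, Φ₁]
      simp only [← map_neg, ← map_sub, ← map_add]
      congr 1
      have : A (g + b * u + Q u) = A (g + b * v + Q v) + A (b * (u - v) + (Q u - Q v)) := by
        rw [← map_add]; congr 1; ring
      simp only [map_neg, this]
      ring
    rw [e]
    have n1 := hAbA (b * (u - v) + (Q u - Q v))
    have n2 : ‖b * (u - v) + (Q u - Q v)‖ ≤ (B + κ) * ‖u - v‖ := by
      refine (norm_add_le _ _).trans ?_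
      have := (norm_mul_le b (u - v)).trans (mul_le_mul_of_nonneg_right hb (norm_nonneg _))
      linarith
    have n3 := (hA (Q u - Q v)).trans (mul_le_mul_of_nonneg_left hq hα)
    have n4 := mul_le_mul_of_nonneg_left n2 hη
    have n5 := mul_le_mul_of_nonneg_right h1 (norm_nonneg (u - v))
    refine (norm_sub_le _ _).trans ?_
    nlinarith
  have hΦ0 : ‖Φ 0‖ ≤ (1 + α * B) * ‖A g‖ := by
    have e : Φ 0 = -A g + A (b * A g) := by
      have e1 : A (b * -A g) = -A (b * A g) := by
        have e2 : b * -A g = -(b * A g) := by ring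
        rw [e2, map_neg]
      simp only [Φ, Φ₁, hQ0, mul_zero, add_zero, map_add, map_zero, e1]
      abel
    rw [e]
    refine (norm_add_le _ _).trans ?_
    rw [norm_neg]
    have n1 := (hA (b * A g)).trans (mul_le_mul_of_nonneg_left
      ((norm_mul_le b (A g)).trans (mul_le_mul_of_nonneg_right hb (norm_nonneg _))) hα)
    linarith
  have hfix : ∀ u, ‖u‖ ≤ r → Φ u = u → Φ₁ u = u := by
    intro u hu h
    set w := Φ₁ u - u with hw
    have e : w = A (b * w) := by
      have : w = Φ₁ u - Φ u := by rw [h]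
      refine this.trans ?_
      show -A (g + b * u + Q u) - -A (g + b * Φ₁ u + Q u) = _
      rw [sub_neg_eq_add, add_comm, ← sub_eq_add_neg, ← map_sub]
      congr 1
      rw [hw]; ring
    have e2 : w = A (b * A (b * w)) := by rw [← e, ← e]
    have n1 := hAbA (b * w)
    rw [← e2] at n1
    have n2 := (norm_mul_le b w).trans (mul_le_mul_of_nonneg_right hb (norm_nonneg _))
    have n3 := mul_le_mul_of_nonneg_left n2 hη
    have n4 : η * B ≤ 1 / 2 := by nlinarith [mul_nonneg hη hκ, mul_nonneg hα hκ]
    have n5 := mul_le_mul_of_nonneg_right n4 (norm_nonneg w)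
    have : ‖w‖ ≤ 0 := by nlinarith
    exact sub_eq_zero.1 (norm_le_zero_iff.1 this)
  refine ⟨?_, ?_⟩
  · let s : Set (ℝ →ᵇ ℝ) := Metric.closedBall 0 r
    have hmem : ∀ u, u ∈ s ↔ ‖u‖ ≤ r := fun u => by simp [s]
    have hmaps : Set.MapsTo Φ s s := by
      intro u hu
      rw [hmem] at hu ⊢
      have := hlip u 0 hu (by simpa using hr.le)
      rw [sub_zero] at this
      have t := norm_sub_norm_le (Φ u) (Φ 0)
      linarith
    have hc : ContractingWith (1 / 2) (hmaps.restrict Φ s s) := by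
      refine ⟨by norm_num, LipschitzWith.of_dist_le_mul fun u v => ?_⟩
      have := hlip u v ((hmem _).1 u.2) ((hmem _).1 v.2)
      rw [Subtype.dist_eq, Subtype.dist_eq, dist_eq_norm, dist_eq_norm]
      simpa using this
    obtain ⟨u, hus, hu, _⟩ := hc.exists_fixedPoint' (Metric.isClosed_closedBall.isComplete)
      hmaps (x := 0) ((hmem 0).2 (by simpa using hr.le)) (edist_ne_top _ _)
    have hur := (hmem u).1 hus
    refine ⟨u, ?_, (hfix u hur hu).symm⟩
    have := hlip u 0 hur (by simpa using hr.le)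
    rw [sub_zero, hu] at this
    have t := norm_sub_norm_le u (Φ 0)
    linarith
  · intro u v hu hv eu ev
    have fu : Φ u = u := by
      have : Φ₁ u = u := eu.symm
      show -A (g + b * Φ₁ u + Q u) = u
      rw [this]; exact eu.symm
    have fv : Φ v = v := by
      have : Φ₁ v = v := ev.symm
      show -A (g + b * Φ₁ v + Q v) = v
      rw [this]; exact ev.symm
    have := hlip u v hu hv
    rw [fu, fv] at this
    have h0 : ‖u - v‖ ≤ 0 := by linarith
    exact sub_eq_zero.1 (norm_le_zero_iff.1 h0)

lemma rs_bij {E : Type*} [NormedAddCommGroup E] [NormedSpace ℝ E] [CompleteSpace E] (T : E →L[ℝ] E)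
    (hT : ∀ v, ‖T (T v)‖ ≤ 1 / 2 * ‖v‖) :
    Function.Injective (fun v => v + T v) ∧ Function.Surjective (fun v => v + T v) := by
  constructor
  · intro u v huv
    have e : (u - v) = - T (u - v) := by
      simp only at huv
      rw [map_sub]
      have : u - v - (-(T u - T v)) = (u + T u) - (v + T v) := by abel
      rw [← sub_eq_zero, this, huv, sub_self]
    have e2 : u - v = T (T (u - v)) := by
      conv_lhs => rw [e, e]
      simp
    have := hT (u - v)
    rw [← e2] at this
    have h0 : ‖u - v‖ ≤ 0 := by linarith
    exact sub_eq_zero.1 (norm_le_zero_iff.1 h0)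
  · intro w
    have hn : ‖T.comp T‖ < 1 := by
      refine lt_of_le_of_lt (ContinuousLinearMap.opNorm_le_bound _ (by norm_num) hT) (by norm_num)
    obtain ⟨U, hU⟩ := isUnit_one_sub_of_norm_lt_one (R := E →L[ℝ] E) hn
    set z := (↑U⁻¹ : E →L[ℝ] E) w with hz
    have e : z - T (T z) = w := by
      have h1 : (U : E →L[ℝ] E) * (↑U⁻¹ : E →L[ℝ] E) = 1 := U.mul_inv
      have h2 := DFunLike.congr_fun h1 w
      rw [hU] at h2
      simpa using h2
    refine ⟨z - T z, ?_⟩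
    simp only [map_sub]
    rw [← e]; abel

lemma rs_implicit {W E : Type*} [NormedAddCommGroup W] [NormedSpace ℝ W] [CompleteSpace W]
    [NormedAddCommGroup E] [NormedSpace ℝ E] [CompleteSpace E]
    (F : W × E → E) (sol : W → E) (θ₀ : W) (r : ℝ) (F' : W × E →L[ℝ] E) (T : E →L[ℝ] E)
    (hF : AnalyticAt ℝ F (θ₀, sol θ₀)) (hF' : HasFDerivAt F F' (θ₀, sol θ₀))
    (hT : ∀ v, F' (0, v) = v + T v) (hTT : ∀ v, ‖T (T v)‖ ≤ 1 / 2 * ‖v‖)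
    (hsol : ∀ θ, F (θ, sol θ) = 0) (hr : ‖sol θ₀‖ < r)
    (huniq : ∀ θ u, ‖u‖ ≤ r → F (θ, u) = 0 → u = sol θ) : AnalyticAt ℝ sol θ₀ := by
  set x₀ : W × E := (θ₀, sol θ₀) with hx₀
  let Ψ : W × E → W × E := fun x => (x.1, F x)
  let Ψ' : W × E →L[ℝ] W × E := (ContinuousLinearMap.fst ℝ W E).prod F'
  have hΨ : ContDiffAt ℝ ⊤ Ψ x₀ := (analyticAt_fst.prod hF).contDiffAt
  have hΨ' : HasFDerivAt Ψ Ψ' x₀ := hasFDerivAt_fst.prodMk hF'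
  obtain ⟨hinj, hsurj⟩ := rs_bij T hTT
  have hsplit : ∀ x : W × E, F' x = F' (x.1, 0) + (x.2 + T x.2) := by
    intro x
    rw [← hT, ← map_add]; simp
  have hker : Ψ'.ker = ⊥ := by
    rw [LinearMap.ker_eq_bot']
    rintro ⟨θ, v⟩ h
    have h1 : θ = 0 := congrArg Prod.fst h
    have h2 : F' (θ, v) = 0 := congrArg Prod.snd h
    subst h1
    rw [hT] at h2
    have : v = 0 := hinj (by simpa using h2)
    simp [this]
  have hrange : Ψ'.range = ⊤ := by
    rw [LinearMap.range_eq_top]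
    rintro ⟨θ, w⟩
    obtain ⟨v, hv⟩ := hsurj (w - F' (θ, 0))
    refine ⟨(θ, v), ?_⟩
    refine Prod.ext rfl ?_
    show F' (θ, v) = w
    rw [hsplit]; simp only at hv ⊢; rw [hv]; abel
  let e := ContinuousLinearEquiv.ofBijective Ψ' hker hrange
  have he : HasFDerivAt Ψ (e : W × E →L[ℝ] W × E) x₀ := by
    have hcoe : (e : W × E →L[ℝ] W × E) = Ψ' := ContinuousLinearEquiv.coe_ofBijective Ψ' hker hrange
    rw [hcoe]; exact hΨ'
  have hne : (⊤ : WithTop ℕ∞) ≠ 0 := by simp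
  have hstrict := hΨ.hasStrictFDerivAt' he hne
  have hL := hΨ.to_localInverse he hne
  set L := hΨ.localInverse he hne with hLdef
  have hΨx : Ψ x₀ = (θ₀, 0) := by simp only [Ψ, hx₀, hsol]
  rw [hΨx] at hL
  have hL0 : L (θ₀, 0) = x₀ := by rw [← hΨx]; exact hΨ.localInverse_apply_image he hne
  have hLa : AnalyticAt ℝ L (θ₀, 0) := hL.analyticAt
  have hright : ∀ᶠ y in 𝓝 (θ₀, (0:E)), Ψ (L y) = y := by
    rw [← hΨx]; exact hstrict.eventually_right_inverse
  have hι : AnalyticAt ℝ (fun θ : W => (θ, (0:E))) θ₀ := analyticAt_id.prod analyticAt_const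
  have hιc := hι.continuousAt
  have hcomp : AnalyticAt ℝ (fun θ => (L (θ, 0)).2) θ₀ :=
    AnalyticAt.comp (g := Prod.snd) (f := fun θ => L (θ, (0:E))) analyticAt_snd
      (AnalyticAt.comp (g := L) (f := fun θ : W => (θ, (0:E))) hLa hι)
  have hsmall : ∀ᶠ θ in 𝓝 θ₀, ‖(L (θ, 0)).2‖ < r := by
    have hc := hcomp.continuousAt.norm
    have : ‖(L (θ₀, 0)).2‖ < r := by rw [hL0]; exact hr
    exact hc.eventually_lt continuousAt_const this
  refine hcomp.congr ?_
  filter_upwards [hsmall, hιc.eventually hright] with θ h1 h2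
  have h3 : (L (θ, 0)).1 = θ := congrArg Prod.fst h2
  have h4 : F (L (θ, 0)) = 0 := congrArg Prod.snd h2
  refine huniq θ _ h1.le ?_
  have h5 : (θ, (L (θ, 0)).2) = L (θ, 0) := Prod.ext h3.symm rfl
  rw [h5, h4]


lemma rs_bdd (d : ℕ) (G : ℝ × (Fin d → ℝ) → ℝ) (hG : Continuous G)
    (hper : ∀ (n : Fin d → ℤ) p, G (p + (0, fun i => (n i : ℝ) * (2 * Real.pi))) = G p) (R : ℝ) :
    ∃ M, 0 ≤ M ∧ ∀ x ψ, |x| ≤ R → |G (x, ψ)| ≤ M := by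
  have hc : IsCompact ((Set.Icc (-R) R) ×ˢ (Set.Icc (0 : Fin d → ℝ) (fun _ => 2 * Real.pi))) :=
    isCompact_Icc.prod isCompact_Icc
  obtain ⟨C, hC⟩ := hc.exists_bound_of_continuousOn hG.continuousOn
  refine ⟨max C 0, le_max_right _ _, fun x ψ hx => ?_⟩
  obtain ⟨n, hn⟩ := rs_exists_shift d ψ
  have h1 := hC (x, ψ + fun i => (n i : ℝ) * (2 * Real.pi)) ⟨abs_le.1 hx, hn⟩
  have h2 := hper n (x, ψ)
  rw [Prod.mk_add_mk, add_zero] at h2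
  rw [h2, Real.norm_eq_abs] at h1
  exact h1.trans (le_max_left _ _)

lemma rs_dx (d : ℕ) (H : ℝ × (Fin d → ℝ) → ℝ) (hH : ∀ p, AnalyticAt ℝ H p)
    (hper : ∀ (n : Fin d → ℤ) p, H (p + (0, fun i => (n i : ℝ) * (2 * Real.pi))) = H p) :
    ∃ Hx : ℝ × (Fin d → ℝ) → ℝ, (∀ p, AnalyticAt ℝ Hx p) ∧
      (∀ (n : Fin d → ℤ) p, Hx (p + (0, fun i => (n i : ℝ) * (2 * Real.pi))) = Hx p) ∧
      ∀ x ψ, HasDerivAt (fun x => H (x, ψ)) (Hx (x, ψ)) x := by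
  refine ⟨fun q => fderiv ℝ H q (1, 0), fun p => ?_, fun n p => ?_, fun x ψ => ?_⟩
  · exact AnalyticAt.comp (g := ContinuousLinearMap.apply ℝ ℝ ((1 : ℝ), (0 : Fin d → ℝ)))
      (f := fderiv ℝ H) (ContinuousLinearMap.analyticAt _ _) (hH p).fderiv
  · have h1 : (fun q => H (q + (0, fun i => (n i : ℝ) * (2 * Real.pi)))) = H := funext (hper n)
    have h2 := fderiv_comp_add_right (𝕜 := ℝ) (f := H) (x := p) ((0 : ℝ), fun i => (n i : ℝ) * (2 * Real.pi))
    rw [h1] at h2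
    simp only [h2]
  · have h1 := (hH (x, ψ)).differentiableAt.hasFDerivAt
    have h2 : HasDerivAt (fun x : ℝ => (x, ψ)) ((1 : ℝ), (0 : Fin d → ℝ)) x :=
      (hasDerivAt_id x).prodMk (hasDerivAt_const x ψ)
    exact h1.comp_hasDerivAt x h2

lemma rs_lip (d : ℕ) (H Hx : ℝ × (Fin d → ℝ) → ℝ) 
    (hdx : ∀ x ψ, HasDerivAt (fun x => H (x, ψ)) (Hx (x, ψ)) x) (r K c : ℝ) (ψ : Fin d → ℝ)
    (hK : ∀ x, |x| ≤ r → |Hx (x, ψ) - c| ≤ K) (x y : ℝ) (hx : |x| ≤ r) (hy : |y| ≤ r) :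
    |(H (x, ψ) - c * x) - (H (y, ψ) - c * y)| ≤ K * |x - y| := by
  have := Convex.norm_image_sub_le_of_norm_hasDerivWithin_le (𝕜 := ℝ) (s := Set.Icc (-r) r)
    (f := fun x => H (x, ψ) - c * x) (f' := fun x => Hx (x, ψ) - c) (C := K) (x := y) (y := x)
    (fun z _ => by
      have : HasDerivAt (fun x => H (x, ψ) - c * x) (Hx (z, ψ) - c * 1) z :=
        (hdx z ψ).sub ((hasDerivAt_id z).const_mul c)
      rw [mul_one] at this
      exact this.hasDerivWithinAt)
    (fun z hz => hK z (abs_le.2 hz)) (convex_Icc _ _) (abs_le.1 hy) (abs_le.1 hx)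
  simpa using this

lemma rs_core (d : ℕ) (ω : Fin d → ℝ) (H Hx : ℝ × (Fin d → ℝ) → ℝ) (hH : ∀ p, AnalyticAt ℝ H p)
    (hper : ∀ (n : Fin d → ℤ) p, H (p + (0, fun i => (n i : ℝ) * (2 * Real.pi))) = H p)
    (hHx : Continuous Hx)
    (hxper : ∀ (n : Fin d → ℤ) p, Hx (p + (0, fun i => (n i : ℝ) * (2 * Real.pi))) = Hx p)
    (hdx : ∀ x ψ, HasDerivAt (fun x => H (x, ψ)) (Hx (x, ψ)) x)
    (a α B κ η r σ : ℝ) (hα : 0 ≤ α) (hη : 0 ≤ η) (hκ : 0 ≤ κ) (hr : 0 < r)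
    (hκr : ∀ x ψ, |x| ≤ r → |Hx (x, ψ) - Hx (0, ψ)| ≤ κ)
    (hB : ∀ ψ, |Hx (0, ψ) - a| ≤ B)
    (A : (ℝ →ᵇ ℝ) →L[ℝ] (ℝ →ᵇ ℝ)) (hA : ∀ f, ‖A f‖ ≤ α * ‖f‖)
    (htr : ∀ (f g : ℝ →ᵇ ℝ) (s : ℝ), (∀ t, g t = f (t + s)) → ∀ t, A g t = A f (t + s))
    (hAbA : ∀ (θ : Fin d → ℝ) (b : ℝ →ᵇ ℝ), (∀ t, b t = Hx (0, θ + t • ω) - a) →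
      ∀ v, ‖A (b * A v)‖ ≤ η * ‖v‖)
    (hAg : ∀ (θ : Fin d → ℝ) (g : ℝ →ᵇ ℝ), (∀ t, g t = H (0, θ + t • ω)) →
      (1 + α * B) * ‖A g‖ ≤ σ)
    (hσ : σ ≤ r / 4)
    (h1 : η * (B + κ) + α * κ ≤ 1 / 2)
    (h3 : (η + α ^ 2 * κ) * (B + κ) ≤ 1 / 2) :
    ∃ Y : (Fin d → ℝ) → ℝ, (∀ θ, AnalyticAt ℝ Y θ) ∧
      (∀ (n : Fin d → ℤ) θ, Y (θ + fun i => (n i : ℝ) * (2 * Real.pi)) = Y θ) ∧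
      (∀ θ, ∃ g : ℝ →ᵇ ℝ, (∀ t, g t = H (0, θ + t • ω)) ∧ |Y θ| ≤ 2 * ((1 + α * B) * ‖A g‖)) ∧
      ∃ u f : ℝ →ᵇ ℝ, u = A f ∧ (∀ t, u t = Y (t • ω)) ∧
        ∀ t, f t = a * u t - H (u t, t • ω) := by
  have hHc : Continuous H := continuous_iff_continuousAt.2 fun p => (hH p).continuousAt
  have hB0 : 0 ≤ B := (abs_nonneg _).trans (hB 0)
  -- Nemytskii operators
  have mk : ∀ (G : ℝ × (Fin d → ℝ) → ℝ), Continuous G →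
      (∀ (n : Fin d → ℤ) p, G (p + (0, fun i => (n i : ℝ) * (2 * Real.pi))) = G p) →
      ∀ x : (Fin d → ℝ) × (ℝ →ᵇ ℝ), ∃ y : ℝ →ᵇ ℝ, ∀ t, y t = G (x.2 t, x.1 + t • ω) := by
    intro G hG hGp x
    obtain ⟨M, _, hM⟩ := rs_bdd d G hG hGp ‖x.2‖
    refine ⟨BoundedContinuousFunction.ofNormedAddCommGroup
      (fun t => G (x.2 t, x.1 + t • ω)) (by fun_prop) M (fun t => ?_), fun t => rfl⟩
    exact hM _ _ (x.2.norm_coe_le_norm t)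
  choose N hN using mk H hHc hper
  choose C hC using mk (fun p => Hx p - a) (by fun_prop) (fun n p => by simp only [hxper])
  have hNa := rs_nemytskii d ω H hH hper N hN
  have hle : ∀ (u : ℝ →ᵇ ℝ), ‖u‖ ≤ r → ∀ t, |u t| ≤ r := fun u hu t => (u.norm_coe_le_norm t).trans hu
  have hbB : ∀ θ, ‖C (θ, 0)‖ ≤ B := fun θ => by
    refine (BoundedContinuousFunction.norm_le hB0).2 fun t => ?_
    rw [hC]; exact hB _
  have hbA : ∀ θ v, ‖A (C (θ, 0) * A v)‖ ≤ η * ‖v‖ := fun θ => hAbA θ _ (fun t => hC _ t)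
  have hgA : ∀ θ, (1 + α * B) * ‖A (N (θ, 0))‖ ≤ σ := fun θ => hAg θ _ (fun t => hN _ t)
  have key : ∀ θ, ∃ u : ℝ →ᵇ ℝ, ‖u‖ ≤ 2 * ((1 + α * B) * ‖A (N (θ, 0))‖) ∧ u = -A (N (θ, u) - a • u) ∧
      ∀ v, ‖v‖ ≤ r → v = -A (N (θ, v) - a • v) → v = u := by
    intro θ
    set Q : (ℝ →ᵇ ℝ) → (ℝ →ᵇ ℝ) := fun u => N (θ, u) - N (θ, 0) - C (θ, 0) * u - a • u with hQd
    have hQe : ∀ u, N (θ, 0) + C (θ, 0) * u + Q u = N (θ, u) - a • u := by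
      intro u; simp only [hQd]; abel
    have := rs_fixed A α B η κ r hα hη hκ hr (C (θ, 0)) (N (θ, 0)) Q hA (hbB θ) (hbA θ)
      (by simp [hQd]) ?_ h1 ((hgA θ).trans hσ)
    · simp only [hQe] at this
      obtain ⟨⟨u, hu1, hu2⟩, hu3⟩ := this
      have hu4 : ‖u‖ ≤ 2 * σ := hu1.trans (by have := hgA θ; linarith)
      refine ⟨u, hu1, hu2, fun v hv hv2 => hu3 v u hv (hu4.trans (by linarith)) hv2 hu2⟩
    · intro u v hu hv
      refine (BoundedContinuousFunction.norm_le (by positivity)).2 fun t => ?_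
      have h := rs_lip d H Hx hdx r κ (Hx (0, θ + t • ω)) (θ + t • ω) (fun x hx => hκr x _ hx)
        (u t) (v t) (hle u hu t) (hle v hv t)
      have e : (Q u - Q v) t = (H (u t, θ + t • ω) - Hx (0, θ + t • ω) * u t)
          - (H (v t, θ + t • ω) - Hx (0, θ + t • ω) * v t) := by
        simp [hQd, hN, hC]; ring
      rw [e, Real.norm_eq_abs]
      refine h.trans (mul_le_mul_of_nonneg_left ?_ hκ)
      exact (u - v).norm_coe_le_norm t
  choose sol hs0 hs2 hs3 using key
  have hs1 : ∀ θ, ‖sol θ‖ ≤ 2 * σ := fun θ => (hs0 θ).trans (by have := hgA θ; linarith)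
  have hsr : ∀ θ, ‖sol θ‖ ≤ r := fun θ => (hs1 θ).trans (by linarith)
  have hsr' : ∀ θ, ‖sol θ‖ < r := fun θ => lt_of_le_of_lt (hs1 θ) (by linarith)
  -- translation
  have htrans : ∀ θ s t, sol (θ + s • ω) t = sol θ (t + s) := by
    intro θ s
    set v : ℝ →ᵇ ℝ := (sol θ).compContinuous ⟨fun t => t + s, by fun_prop⟩ with hv
    have hvt : ∀ t, v t = sol θ (t + s) := fun t => rfl
    have h := hs3 (θ + s • ω) v ?_ ?_
    · intro t; rw [← hvt, h]
    · refine (BoundedContinuousFunction.norm_le hr.le).2 fun t => ?_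
      rw [hvt]; exact hle _ (hsr θ) _
    · ext t
      have h := htr (N (θ, sol θ) - a • sol θ) (N (θ + s • ω, v) - a • v) s (fun t => by
        have e : θ + s • ω + t • ω = θ + (t + s) • ω := by rw [add_smul]; abel
        simp only [BoundedContinuousFunction.coe_sub, Pi.sub_apply, hN, hvt,
          BoundedContinuousFunction.coe_smul, e]) t
      have h2 := DFunLike.congr_fun (hs2 θ) (t + s)
      rw [hvt, h2]
      simp only [BoundedContinuousFunction.coe_neg, Pi.neg_apply, h]
  have hperS : ∀ (n : Fin d → ℤ) θ, sol (θ + fun i => (n i : ℝ) * (2 * Real.pi)) = sol θ := by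
    intro n θ
    have hNp : ∀ u, N (θ + fun i => (n i : ℝ) * (2 * Real.pi), u) = N (θ, u) := by
      intro u; ext t
      rw [hN, hN, ← hper n (_, θ + t • ω)]
      simp only [Prod.mk_add_mk, add_zero]
      rw [add_right_comm]
    refine hs3 θ _ (hsr _) ?_
    have := hs2 (θ + fun i => (n i : ℝ) * (2 * Real.pi))
    rw [hNp] at this
    exact this
  have hana : ∀ θ, AnalyticAt ℝ sol θ := by
    intro θ₀
    set c : ℝ →ᵇ ℝ := C (θ₀, sol θ₀) with hc
    have hcb : ‖c - C (θ₀, 0)‖ ≤ κ := by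
      refine (BoundedContinuousFunction.norm_le hκ).2 fun t => ?_
      simp only [hc, BoundedContinuousFunction.coe_sub, Pi.sub_apply, hC]
      have := hκr (sol θ₀ t) (θ₀ + t • ω) (hle _ (hsr θ₀) t)
      simpa using this
    have hcB : ‖c‖ ≤ B + κ := by
      have e : c = C (θ₀, 0) + (c - C (θ₀, 0)) := by abel
      rw [e]; exact (norm_add_le _ _).trans (add_le_add (hbB θ₀) hcb)
    let T : (ℝ →ᵇ ℝ) →L[ℝ] (ℝ →ᵇ ℝ) := A.comp (ContinuousLinearMap.mul ℝ (ℝ →ᵇ ℝ) c)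
    have hTv : ∀ v, T v = A (c * v) := fun v => rfl
    let F : (Fin d → ℝ) × (ℝ →ᵇ ℝ) → (ℝ →ᵇ ℝ) := fun x => x.2 + A (N x - a • x.2)
    have hNd := (hNa (θ₀, sol θ₀)).differentiableAt.hasFDerivAt
    set N' := fderiv ℝ N (θ₀, sol θ₀) with hN'
    let snd := ContinuousLinearMap.snd ℝ (Fin d → ℝ) (ℝ →ᵇ ℝ)
    have hF' : HasFDerivAt F (snd + A.comp (N' - a • snd)) (θ₀, sol θ₀) :=
      hasFDerivAt_snd.add (A.hasFDerivAt.comp _ (hNd.sub (a • snd).hasFDerivAt))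
    have hN'v : ∀ v, N' (0, v) - a • v = c * v := by
      intro v; ext t
      have e1 : HasDerivAt (fun s : ℝ => (θ₀, sol θ₀ + s • v)) ((0 : Fin d → ℝ), v) 0 := by
        refine (hasDerivAt_const _ _).prodMk ?_
        have := ((hasDerivAt_id (0:ℝ)).smul_const v).const_add (sol θ₀)
        simpa using this
      have e2 : HasDerivAt (fun s : ℝ => N (θ₀, sol θ₀ + s • v)) (N' (0, v)) 0 := by
        refine HasFDerivAt.comp_hasDerivAt (l := N) (l' := N') (f := fun s : ℝ => (θ₀, sol θ₀ + s • v)) 0 ?_ e1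
        simpa using hNd
      have e3 : HasDerivAt (fun s : ℝ => N (θ₀, sol θ₀ + s • v) t) (N' (0, v) t) 0 := by
        let ev : (ℝ →ᵇ ℝ) →L[ℝ] ℝ := BoundedContinuousFunction.evalCLM ℝ t
        exact ev.hasFDerivAt.comp_hasDerivAt 0 e2
      have e4 : HasDerivAt (fun s : ℝ => N (θ₀, sol θ₀ + s • v) t)
          (Hx (sol θ₀ t, θ₀ + t • ω) * v t) 0 := by
        have e5 : HasDerivAt (fun s : ℝ => sol θ₀ t + s * v t) (v t) 0 := by
          have := ((hasDerivAt_id (0:ℝ)).mul_const (v t)).const_add (sol θ₀ t)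
          simpa using this
        have e6 := hdx (sol θ₀ t + 0 * v t) (θ₀ + t • ω)
        have e7 := HasDerivAt.comp (0:ℝ) (h₂ := fun x => H (x, θ₀ + t • ω)) (h := fun s : ℝ => sol θ₀ t + s * v t) e6 e5
        simp only [zero_mul, add_zero] at e7
        refine e7.congr_of_eventuallyEq (Eventually.of_forall fun s => ?_)
        simp [hN]
      have e8 := e3.unique e4
      simp only [BoundedContinuousFunction.coe_sub, Pi.sub_apply, BoundedContinuousFunction.coe_mul,
        Pi.mul_apply, BoundedContinuousFunction.coe_smul, smul_eq_mul, e8, hc, hC]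
      ring
    refine rs_implicit F sol θ₀ r _ T ?_ hF' ?_ ?_ ?_ (hsr' θ₀) ?_
    · refine analyticAt_snd.add ?_
      refine AnalyticAt.comp (g := A) (A.analyticAt _) ?_
      exact (hNa _).sub ((a • snd).analyticAt _)
    · intro v
      have := hN'v v
      rw [hTv, ← this]; rfl
    · intro v
      have m1 := hbA θ₀ (c * v)
      have m2 := hA ((c - C (θ₀, 0)) * A (c * v))
      have m3 := norm_mul_le (c - C (θ₀, 0)) (A (c * v))
      have m4 := hA (c * v)
      have m5 := (norm_mul_le c v).trans (mul_le_mul_of_nonneg_right hcB (norm_nonneg _))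
      have e : T (T v) = A (C (θ₀, 0) * A (c * v)) + A ((c - C (θ₀, 0)) * A (c * v)) := by
        rw [hTv, hTv, ← map_add]; congr 1; ring
      rw [e]
      have m6 : ‖c - C (θ₀, 0)‖ * ‖A (c * v)‖ ≤ κ * (α * ‖c * v‖) :=
        mul_le_mul hcb m4 (norm_nonneg _) hκ
      have m7 : α * ‖(c - C (θ₀, 0)) * A (c * v)‖ ≤ α * (κ * (α * ‖c * v‖)) :=
        mul_le_mul_of_nonneg_left (m3.trans m6) hα
      calc _ ≤ η * ‖c * v‖ + α * (κ * (α * ‖c * v‖)) :=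
            (norm_add_le _ _).trans (add_le_add m1 (m2.trans m7))
        _ = (η + α ^ 2 * κ) * ‖c * v‖ := by ring
        _ ≤ (η + α ^ 2 * κ) * ((B + κ) * ‖v‖) := mul_le_mul_of_nonneg_left m5 (by positivity)
        _ = ((η + α ^ 2 * κ) * (B + κ)) * ‖v‖ := by ring
        _ ≤ _ := mul_le_mul_of_nonneg_right h3 (norm_nonneg _)
    · intro θ
      have := hs2 θ
      show sol θ + A (N (θ, sol θ) - a • sol θ) = 0
      nth_rewrite 1 [this]
      simp
    · intro θ u hu hFu
      exact hs3 θ u hu (eq_neg_of_add_eq_zero_left hFu)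
  refine ⟨fun θ => sol θ 0, fun θ => ?_, fun n θ => ?_, fun θ => ?_, sol 0,
    a • sol 0 - N (0, sol 0), ?_, fun t => ?_, fun t => ?_⟩
  · let ev : (ℝ →ᵇ ℝ) →L[ℝ] ℝ := BoundedContinuousFunction.evalCLM ℝ (0 : ℝ)
    exact AnalyticAt.comp (g := ev) (f := sol) (ev.analyticAt _) (hana θ)
  · simp only [hperS]
  · exact ⟨N (θ, 0), fun t => hN _ t, ((sol θ).norm_coe_le_norm 0).trans (hs0 θ)⟩
  · have := hs2 0
    rw [← map_neg, neg_sub] at this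
    exact this
  · have := htrans 0 t 0
    simpa using this.symm
  · simp [hN]


lemma rs_est_g (A : (ℝ →ᵇ ℝ) →L[ℝ] (ℝ →ᵇ ℝ)) (α e M δ : ℝ) (hα : 0 ≤ α) (hδ : 0 ≤ δ)
    (hA : ∀ f, ‖A f‖ ≤ α * ‖f‖)
    (hP : ∀ P p : ℝ →ᵇ ℝ, (∀ t, HasDerivAt P (p t) t) → ‖A p‖ ≤ 4 * |e| * ‖P‖)
    (g P p : ℝ →ᵇ ℝ) (hPp : ∀ t, HasDerivAt P (p t) t) (hM : ‖P‖ ≤ M)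
    (hg : ∀ t, |g t - p t| ≤ δ) : ‖A g‖ ≤ 4 * |e| * M + α * δ := by
  have e1 : A g = A p + A (g - p) := by rw [← map_add]; congr 1; abel
  have n1 := (hP P p hPp).trans (mul_le_mul_of_nonneg_left hM (by positivity))
  have n2 : ‖g - p‖ ≤ δ := (BoundedContinuousFunction.norm_le hδ).2 hg
  have n3 := (hA (g - p)).trans (mul_le_mul_of_nonneg_left n2 hα)
  rw [e1]
  exact (norm_add_le _ _).trans (add_le_add n1 n3)

lemma rs_est_b (A : (ℝ →ᵇ ℝ) →L[ℝ] (ℝ →ᵇ ℝ)) (α e M δ : ℝ) (hα : 0 ≤ α) (hδ : 0 ≤ δ)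
    (hA : ∀ f, ‖A f‖ ≤ α * ‖f‖)
    (hP : ∀ P p : ℝ →ᵇ ℝ, (∀ t, HasDerivAt P (p t) t) → ‖A p‖ ≤ 4 * |e| * ‖P‖)
    (hD : ∀ f, ∃ D : ℝ →ᵇ ℝ, (∀ t, HasDerivAt (A f) (D t) t) ∧ ‖D‖ ≤ 4 * |e| * ‖f‖)
    (b P p : ℝ →ᵇ ℝ) (hPp : ∀ t, HasDerivAt P (p t) t) (hM : ‖P‖ ≤ M)
    (hb : ∀ t, |b t - p t| ≤ δ) (v : ℝ →ᵇ ℝ) :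
    ‖A (b * A v)‖ ≤ (8 * |e| * M * α + α ^ 2 * δ) * ‖v‖ := by
  obtain ⟨D, hD1, hD2⟩ := hD v
  have hM0 : 0 ≤ M := (norm_nonneg _).trans hM
  set w := A v with hw
  have hwn : ‖w‖ ≤ α * ‖v‖ := hA v
  have e1 : A (b * w) = A (p * w + P * D) - A (P * D) + A ((b - p) * w) := by
    rw [← map_sub, ← map_add]; congr 1; ring
  have n1 : ‖A (p * w + P * D)‖ ≤ 4 * |e| * ‖P * w‖ := hP (P * w) _ (fun t => (hPp t).mul (hD1 t))
  have n2 : ‖P * w‖ ≤ M * (α * ‖v‖) :=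
    (norm_mul_le _ _).trans (mul_le_mul hM hwn (norm_nonneg _) hM0)
  have n3 : ‖P * D‖ ≤ M * (4 * |e| * ‖v‖) :=
    (norm_mul_le _ _).trans (mul_le_mul hM hD2 (norm_nonneg _) hM0)
  have n4 : ‖b - p‖ ≤ δ := (BoundedContinuousFunction.norm_le hδ).2 hb
  have n5 : ‖(b - p) * w‖ ≤ δ * (α * ‖v‖) :=
    (norm_mul_le _ _).trans (mul_le_mul n4 hwn (norm_nonneg _) hδ)
  have n6 := (hA (P * D)).trans (mul_le_mul_of_nonneg_left n3 hα)
  have n7 := (hA ((b - p) * w)).trans (mul_le_mul_of_nonneg_left n5 hα)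
  have n8 := n1.trans (mul_le_mul_of_nonneg_left n2 (by positivity))
  rw [e1]
  refine (norm_add_le _ _).trans ((add_le_add ((norm_sub_le _ _).trans (add_le_add n8 n6)) n7).trans ?_)
  apply le_of_eq; ring

lemma rs_mean (d : ℕ) (h : ℝ → (Fin d → ℝ) → ℝ) (h₀ : ℝ → ℝ)
    (hh₀ : ∀ x : ℝ, h₀ x = ((2 * Real.pi) ^ d)⁻¹ *
      ∫ ψ in Set.Icc (0 : Fin d → ℝ) (fun _ => 2 * Real.pi), h x ψ)
    (c₀ : ℝ) (hc : Continuous fun q : ℝ × (Fin d → ℝ) => h q.1 q.2)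
    (Hx : ℝ × (Fin d → ℝ) → ℝ) (hHx : Continuous Hx)
    (hxper : ∀ (n : Fin d → ℤ) p, Hx (p + (0, fun i => (n i : ℝ) * (2 * Real.pi))) = Hx p)
    (hdx : ∀ x ψ, HasDerivAt (fun x => h (c₀ + x) ψ) (Hx (x, ψ)) x) :
    ∫ ψ in Set.Icc (0 : Fin d → ℝ) (fun _ => 2 * Real.pi), (Hx (0, ψ) - deriv h₀ c₀) = 0 := by
  obtain ⟨M, hM0, hM⟩ := rs_bdd d Hx hHx hxper 1
  set μ := (volume : Measure (Fin d → ℝ)).restrict (Set.Icc (0 : Fin d → ℝ) (fun _ => 2 * Real.pi)) with hμ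
  have hfin : IsFiniteMeasure μ := ⟨by
    rw [hμ, Measure.restrict_apply_univ]; exact isCompact_Icc.measure_lt_top⟩
  have hint : ∀ G : (Fin d → ℝ) → ℝ, Continuous G → Integrable G μ := fun G hG =>
    (hG.continuousOn.integrableOn_compact isCompact_Icc)
  have hderiv := (hasDerivAt_integral_of_dominated_loc_of_deriv_le (μ := μ) (𝕜 := ℝ)
    (F := fun x ψ => h (c₀ + x) ψ) (F' := fun x ψ => Hx (x, ψ)) (x₀ := 0)
    (s := Metric.ball (0:ℝ) 1) (bound := fun _ => M) (Metric.ball_mem_nhds _ one_pos)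
    (Eventually.of_forall fun x => (hint _ (by fun_prop)).aestronglyMeasurable)
    (hint _ (by fun_prop)) (hint _ (by fun_prop)).aestronglyMeasurable
    (Eventually.of_forall fun ψ x hx => hM x ψ (by simpa using (mem_ball_zero_iff.1 hx).le))
    (integrable_const _)
    (Eventually.of_forall fun ψ x hx => hdx x ψ)).2
  have h1 : HasDerivAt h₀ (((2 * Real.pi) ^ d)⁻¹ * ∫ ψ, Hx (0, ψ) ∂μ) c₀ := by
    have h2 := hderiv.const_mul (((2 * Real.pi) ^ d)⁻¹)
    have h3 : (fun x => ((2 * Real.pi) ^ d)⁻¹ * ∫ ψ, h (c₀ + x) ψ ∂μ) = fun x => h₀ (c₀ + x) := by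
      funext x; rw [hh₀]
    rw [h3] at h2
    have h4 : HasDerivAt (fun x => h₀ (c₀ + x)) (((2 * Real.pi) ^ d)⁻¹ * ∫ ψ, Hx (0, ψ) ∂μ) (c₀ - c₀) := by
      rw [sub_self]; exact h2
    have h5 := HasDerivAt.comp_sub_const c₀ c₀ h4
    simpa using h5
  have hp : (2 * Real.pi) ^ d ≠ 0 := by positivity
  have hvol : μ.real Set.univ = (2 * Real.pi) ^ d := by
    rw [measureReal_def, hμ, Measure.restrict_apply_univ, Real.volume_Icc_pi_toReal]
    · simp
    · intro i; simpa using Real.two_pi_pos.le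
  rw [integral_sub (hint _ (by fun_prop)) (integrable_const _), integral_const, hvol, h1.deriv]
  rw [smul_eq_mul, mul_inv_cancel_left₀ hp, sub_self]


/-- **Existence of response solutions for `ε x'' + x' + ε h(x, ωt) = 0` with arbitrary
frequency vectors.**  Let `ω ∈ ℝ^d` be nonresonant, `h : ℝ × ℝ^d → ℝ` real analytic and
`2π`-periodic in each of the last `d` coordinates, and let `c₀` be a simple zero of the
average `h₀`.  Then for all `ε` with `0 < |ε| < ε₀` there is a real analytic periodic
`X ε` such that `x(t) = c₀ + X ε (t • ω)` solves the equation, with `sup |X ε| → 0`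
as `ε → 0`. -/
theorem response_solution_exists_general
    (d : ℕ) (hd : 1 ≤ d) (ω : Fin d → ℝ)
    (hω : ∀ ν : Fin d → ℤ, ν ≠ 0 → (∑ i, ω i * (ν i : ℝ)) ≠ 0)
    (h : ℝ → (Fin d → ℝ) → ℝ)
    (hh : ∀ p : ℝ × (Fin d → ℝ), AnalyticAt ℝ (fun q : ℝ × (Fin d → ℝ) => h q.1 q.2) p)
    (hhper : ∀ (x : ℝ) (ψ : Fin d → ℝ) (i : Fin d),
      h x (ψ + Pi.single i (2 * Real.pi)) = h x ψ)
    (h₀ : ℝ → ℝ)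
    (hh₀ : ∀ x : ℝ, h₀ x = ((2 * Real.pi) ^ d)⁻¹ *
      ∫ ψ in Set.Icc (0 : Fin d → ℝ) (fun _ => 2 * Real.pi), h x ψ)
    (c₀ : ℝ) (hzero : h₀ c₀ = 0) (hsimple : deriv h₀ c₀ ≠ 0) :
    ∃ ε₀ > (0 : ℝ), ∃ X : ℝ → (Fin d → ℝ) → ℝ,
      (∀ ε : ℝ, 0 < |ε| → |ε| < ε₀ →
        (∀ ψ : Fin d → ℝ, AnalyticAt ℝ (X ε) ψ) ∧
        (∀ (ψ : Fin d → ℝ) (i : Fin d), X ε (ψ + Pi.single i (2 * Real.pi)) = X ε ψ) ∧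
        (∀ t : ℝ,
          ε * deriv (deriv (fun s : ℝ => c₀ + X ε (s • ω))) t
            + deriv (fun s : ℝ => c₀ + X ε (s • ω)) t
            + ε * h (c₀ + X ε (t • ω)) (t • ω)
            = 0)) ∧
      TendstoUniformly X 0 (nhdsWithin (0 : ℝ) {0}ᶜ) := by
  -- translate to the origin
  set H : ℝ × (Fin d → ℝ) → ℝ := fun q => h (c₀ + q.1) q.2 with hHd
  have hH : ∀ p, AnalyticAt ℝ H p := by
    intro p
    exact AnalyticAt.comp (g := fun q : ℝ × (Fin d → ℝ) => h q.1 q.2)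
      (f := fun q : ℝ × (Fin d → ℝ) => (c₀ + q.1, q.2)) (hh _)
      ((analyticAt_const.add analyticAt_fst).prod analyticAt_snd)
  have hper : ∀ (n : Fin d → ℤ) p, H (p + (0, fun i => (n i : ℝ) * (2 * Real.pi))) = H p := by
    intro n p
    have := rs_per_int d (h (c₀ + p.1)) (fun ψ i => hhper _ ψ i) n p.2
    simpa [hHd] using this
  have hHc : Continuous H := continuous_iff_continuousAt.2 fun p => (hH p).continuousAt
  have hhc : Continuous fun q : ℝ × (Fin d → ℝ) => h q.1 q.2 :=
    continuous_iff_continuousAt.2 fun p => (hh p).continuousAt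
  obtain ⟨Hx, hHxa, hxper, hdx⟩ := rs_dx d H hH hper
  have hHxc : Continuous Hx := continuous_iff_continuousAt.2 fun p => (hHxa p).continuousAt
  obtain ⟨Hxx, hHxxa, hxxper, hdxx⟩ := rs_dx d Hx hHxa hxper
  have hHxxc : Continuous Hxx := continuous_iff_continuousAt.2 fun p => (hHxxa p).continuousAt
  set a := deriv h₀ c₀ with ha
  have hbmean := rs_mean d h h₀ hh₀ c₀ hhc Hx hHxc hxper hdx
  rw [← ha] at hbmean
  have hgmean : ∫ ψ in Set.Icc (0 : Fin d → ℝ) (fun _ => 2 * Real.pi), H (0, ψ) = 0 := by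
    have h1 := hh₀ c₀
    rw [hzero] at h1
    have hp : ((2 * Real.pi) ^ d)⁻¹ ≠ 0 := by positivity
    have h2 := (mul_eq_zero.1 h1.symm).resolve_left hp
    simpa [hHd] using h2
  have single : ∀ (G : ℝ × (Fin d → ℝ) → ℝ),
      (∀ (n : Fin d → ℤ) p, G (p + (0, fun i => (n i : ℝ) * (2 * Real.pi))) = G p) →
      ∀ x ψ i, G (x, ψ + Pi.single i (2 * Real.pi)) = G (x, ψ) := by
    intro G hG x ψ i
    have h1 := hG (Pi.single i 1) (x, ψ)
    have h2 : (fun j => (((Pi.single i 1 : Fin d → ℤ) j : ℤ) : ℝ) * (2 * Real.pi)) =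
        Pi.single i (2 * Real.pi) := by
      funext j
      by_cases hj : j = i
      · subst hj; simp
      · simp [Pi.single_eq_of_ne hj]
    rw [h2, Prod.mk_add_mk, add_zero] at h1
    exact h1
  -- constants
  obtain ⟨B₀, hB₀, hB₁⟩ := rs_bdd d Hx hHxc hxper 0
  obtain ⟨K, hK0, hK⟩ := rs_bdd d Hxx hHxxc hxxper 1
  have ha0 : 0 < |a| := abs_pos.2 hsimple
  obtain ⟨α, hαd⟩ : ∃ α, α = |a|⁻¹ := ⟨_, rfl⟩
  have hα : 0 < α := by rw [hαd]; positivity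
  obtain ⟨B, hBd⟩ : ∃ B, B = B₀ + |a| := ⟨_, rfl⟩
  have hB0 : 0 < B := by rw [hBd]; positivity
  have hB : ∀ ψ, |Hx (0, ψ) - a| ≤ B := fun ψ => by
    rw [hBd]; exact (abs_sub _ _).trans (add_le_add (hB₁ 0 ψ (by simp)) le_rfl)
  obtain ⟨κ, hκd⟩ : ∃ κ, κ = 1 / (4 * (1 + α + α ^ 2 * (B + 1))) := ⟨_, rfl⟩
  have hκ : 0 < κ := by rw [hκd]; positivity
  have hκe : κ * (1 + α + α ^ 2 * (B + 1)) = 1 / 4 := by rw [hκd]; field_simp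
  have hκ1 : κ ≤ 1 / 4 := by
    have : 0 ≤ κ * (α + α ^ 2 * (B + 1)) := by positivity
    linarith
  have hκ2 : α * κ ≤ 1 / 4 := by
    have : 0 ≤ κ * (1 + α ^ 2 * (B + 1)) := by positivity
    linarith
  have hκ3 : α ^ 2 * κ * (B + 1) ≤ 1 / 4 := by
    have : 0 ≤ κ * (1 + α) := by positivity
    linarith
  obtain ⟨η, hηd⟩ : ∃ η, η = 1 / (4 * (B + 1)) := ⟨_, rfl⟩
  have hη : 0 < η := by rw [hηd]; positivity
  have hηe : η * (B + 1) = 1 / 4 := by rw [hηd]; field_simp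
  have hc1 : η * (B + κ) + α * κ ≤ 1 / 2 := by
    have : η * (B + κ) ≤ η * (B + 1) := mul_le_mul_of_nonneg_left (by linarith) hη.le
    linarith
  have hc3 : (η + α ^ 2 * κ) * (B + κ) ≤ 1 / 2 := by
    have : (η + α ^ 2 * κ) * (B + κ) ≤ (η + α ^ 2 * κ) * (B + 1) :=
      mul_le_mul_of_nonneg_left (by linarith) (by positivity)
    linarith
  obtain ⟨r, hr, hr1, hr2⟩ : ∃ r : ℝ, 0 < r ∧ r ≤ 1 ∧ K * r ≤ κ := by
    refine ⟨min 1 (κ / (K + 1)), by positivity, min_le_left _ _, ?_⟩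
    have h1 : min 1 (κ / (K + 1)) ≤ κ / (K + 1) := min_le_right _ _
    rw [le_div_iff₀ (by positivity)] at h1
    have h2 : 0 < min 1 (κ / (K + 1)) := by positivity
    linarith
  have hκr : ∀ x ψ, |x| ≤ r → |Hx (x, ψ) - Hx (0, ψ)| ≤ κ := by
    intro x ψ hx
    have h1 := rs_lip d Hx Hxx hdxx 1 K 0 ψ (fun y hy => by rw [sub_zero]; exact hK y ψ hy) x 0
      (hx.trans hr1) (by simp)
    simp only [zero_mul, sub_zero] at h1
    exact h1.trans ((mul_le_mul_of_nonneg_left hx hK0).trans hr2)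
  -- averaging
  have avb : ∀ δ : ℝ, 0 < δ → ∃ M : ℝ, ∀ θ : Fin d → ℝ, ∃ P p : ℝ →ᵇ ℝ,
      (∀ t, HasDerivAt P (p t) t) ∧ ‖P‖ ≤ M ∧ ∀ t, |Hx (0, θ + t • ω) - a - p t| ≤ δ := fun δ hδ =>
    rs_averaging d ω hω (fun ψ => Hx (0, ψ) - a) (by fun_prop)
      (fun ψ i => by simp only [single Hx hxper]) hbmean δ hδ
  have avg : ∀ δ : ℝ, ∃ M : ℝ, 0 < δ → ∀ θ : Fin d → ℝ, ∃ P p : ℝ →ᵇ ℝ,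
      (∀ t, HasDerivAt P (p t) t) ∧ ‖P‖ ≤ M ∧ ∀ t, |H (0, θ + t • ω) - p t| ≤ δ := fun δ => by
    by_cases hδ : 0 < δ
    · obtain ⟨M, hM⟩ := rs_averaging d ω hω (fun ψ => H (0, ψ)) (by fun_prop)
        (fun ψ i => by simp only [single H hper]) hgmean δ hδ
      exact ⟨M, fun _ => hM⟩
    · exact ⟨0, fun hδ' => absurd hδ' hδ⟩
  choose M hM using avg
  have hM0 : ∀ δ, 0 < δ → 0 ≤ M δ := fun δ hδ => by
    obtain ⟨P, p, _, h2, _⟩ := hM δ hδ 0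
    exact (norm_nonneg _).trans h2
  obtain ⟨δb, hδbd⟩ : ∃ δb, δb = η / (2 * α ^ 2) := ⟨_, rfl⟩
  have hδb : 0 < δb := by rw [hδbd]; positivity
  have hδbe : α ^ 2 * δb = η / 2 := by rw [hδbd]; field_simp
  obtain ⟨Mb, hMb⟩ := avb δb hδb
  have hMb0 : 0 ≤ Mb := by
    obtain ⟨P, p, _, h2, _⟩ := hMb 0
    exact (norm_nonneg _).trans h2
  obtain ⟨S, hSd⟩ : ∃ S, S = 1 + α * B := ⟨_, rfl⟩
  have hS : 0 < S := by rw [hSd]; positivity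
  obtain ⟨δg, hδgd⟩ : ∃ δg, δg = r / (8 * S * α) := ⟨_, rfl⟩
  have hδg : 0 < δg := by rw [hδgd]; positivity
  have hδge : S * (α * δg) = r / 8 := by rw [hδgd]; field_simp
  have hMg0 := hM0 δg hδg
  obtain ⟨ε₀, hε₀, hε1, hε2, hε3⟩ : ∃ ε₀ : ℝ, 0 < ε₀ ∧ (∀ x, 0 ≤ x → x < ε₀ → 4 * x ^ 2 * |a| ≤ 1) ∧
      (∀ x, 0 ≤ x → x < ε₀ → 8 * x * Mb * α ≤ η / 2) ∧
      (∀ x, 0 ≤ x → x < ε₀ → S * (4 * x * M δg) ≤ r / 8) := by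
    have lin : ∀ c ρ : ℝ, 0 ≤ c → 0 < ρ → ∀ᶠ x in 𝓝 (0:ℝ), c * x ≤ ρ := by
      intro c ρ _ hρ
      have : Tendsto (fun x : ℝ => c * x) (𝓝 0) (𝓝 (c * 0)) := tendsto_id.const_mul c
      rw [mul_zero] at this
      exact (this.eventually (gt_mem_nhds hρ)).mono fun x hx => le_of_lt hx
    have q1 : ∀ᶠ x in 𝓝 (0:ℝ), 4 * x ^ 2 * |a| ≤ 1 := by
      have : Tendsto (fun x : ℝ => 4 * x ^ 2 * |a|) (𝓝 0) (𝓝 (4 * 0 ^ 2 * |a|)) :=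
        Continuous.tendsto (by fun_prop) 0
      have h0 : (4 * 0 ^ 2 * |a| : ℝ) = 0 := by ring
      rw [h0] at this
      exact (this.eventually (gt_mem_nhds one_pos)).mono fun x hx => le_of_lt hx
    have q2 := lin (8 * Mb * α) (η / 2) (by positivity) (by positivity)
    have q3 := lin (S * (4 * M δg)) (r / 8) (by positivity) (by positivity)
    obtain ⟨ε₀, hε₀, hball⟩ := Metric.eventually_nhds_iff.1 (q1.and (q2.and q3))
    have hd' : ∀ x : ℝ, 0 ≤ x → x < ε₀ → dist x 0 < ε₀ := fun x hx hx' => by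
      rw [Real.dist_0_eq_abs, abs_of_nonneg hx]; exact hx'
    refine ⟨ε₀, hε₀, fun x hx hx' => (hball (hd' x hx hx')).1, fun x hx hx' => ?_, fun x hx hx' => ?_⟩
    · have := (hball (hd' x hx hx')).2.1; linarith
    · have := (hball (hd' x hx hx')).2.2; linarith
  have main : ∀ ε : ℝ, 0 < |ε| → |ε| < ε₀ → ∃ Y : (Fin d → ℝ) → ℝ,
      ((∀ ψ : Fin d → ℝ, AnalyticAt ℝ Y ψ) ∧
        (∀ (ψ : Fin d → ℝ) (i : Fin d), Y (ψ + Pi.single i (2 * Real.pi)) = Y ψ) ∧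
        (∀ t : ℝ, ε * deriv (deriv (fun s : ℝ => c₀ + Y (s • ω))) t
            + deriv (fun s : ℝ => c₀ + Y (s • ω)) t
            + ε * h (c₀ + Y (t • ω)) (t • ω) = 0)) ∧
      ∀ δ, 0 < δ → ∀ θ, |Y θ| ≤ 2 * (S * (4 * |ε| * M δ + α * δ)) := by
    intro ε hε hεε
    obtain ⟨A, hA1, hA2, hA3, hA4⟩ := rs_green a ε (abs_pos.1 hε)
      (by have := hε1 |ε| hε.le hεε; rwa [sq_abs] at this) hsimple
    have hA : ∀ f, ‖A f‖ ≤ α * ‖f‖ := fun f => by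
      rw [hαd, mul_comm, ← div_eq_mul_inv]; exact hA1 f
    have hgest : ∀ δ, 0 < δ → ∀ (θ : Fin d → ℝ) (g : ℝ →ᵇ ℝ), (∀ t, g t = H (0, θ + t • ω)) →
        S * ‖A g‖ ≤ S * (4 * |ε| * M δ + α * δ) := by
      intro δ hδ θ g hg
      obtain ⟨P, p, h1, h2, h3⟩ := hM δ hδ θ
      exact mul_le_mul_of_nonneg_left (rs_est_g A α ε (M δ) δ hα.le hδ.le hA hA3 g P p h1 h2
        (fun t => by rw [hg]; exact h3 t)) hS.le
    have hbest : ∀ (θ : Fin d → ℝ) (b : ℝ →ᵇ ℝ), (∀ t, b t = Hx (0, θ + t • ω) - a) →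
        ∀ v, ‖A (b * A v)‖ ≤ η * ‖v‖ := by
      intro θ b hb v
      obtain ⟨P, p, h1, h2, h3⟩ := hMb θ
      refine (rs_est_b A α ε Mb δb hα.le hδb.le hA hA3 (fun f => ?_) b P p h1 h2
        (fun t => by rw [hb]; exact h3 t) v).trans (mul_le_mul_of_nonneg_right ?_ (norm_nonneg _))
      · obtain ⟨D, D2, k1, _, k3, _⟩ := hA2 f
        exact ⟨D, k1, k3⟩
      · have := hε2 |ε| hε.le hεε
        linarith
    obtain ⟨Y, hY1, hY2, hY3, u, f, hu1, hu2, hu3⟩ := rs_core d ω H Hx hH hper hHxc hxper hdx a α B κ η r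
      (r / 4) hα.le hη.le hκ.le hr hκr hB A hA hA4 hbest
      (fun θ g hg => by
        rw [← hSd]
        refine (hgest δg hδg θ g hg).trans ?_
        have := hε3 |ε| hε.le hεε
        rw [mul_add]; linarith) le_rfl hc1 hc3
    refine ⟨Y, ⟨hY1, fun ψ i => ?_, fun t => ?_⟩, fun δ hδ θ => ?_⟩
    · exact single (fun p => Y p.2) (fun n p => hY2 n p.2) 0 ψ i
    · obtain ⟨D, D2, k1, k2, _, k4⟩ := hA2 f
      rw [← hu1] at k1
      have e1 : (fun s : ℝ => c₀ + Y (s • ω)) = fun s => c₀ + u s := by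
        funext s; rw [hu2]
      have e2 : deriv (fun s => c₀ + u s) = D := by
        funext s; exact ((k1 s).const_add c₀).deriv
      have k5 := k4 t
      rw [← hu1, hu3] at k5
      rw [e1, e2, (k2 t).deriv, ← hu2]
      simp only [hHd] at k5
      linarith
    · obtain ⟨g, hg1, hg2⟩ := hY3 θ
      rw [← hSd] at hg2
      have := hgest δ hδ θ g hg1
      linarith
  classical
  refine ⟨ε₀, hε₀, fun ε => if hε : 0 < |ε| ∧ |ε| < ε₀ then (main ε hε.1 hε.2).choose else 0, ?_, ?_⟩
  · intro ε h1 h2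
    have h3 : 0 < |ε| ∧ |ε| < ε₀ := ⟨h1, h2⟩
    simp only [dif_pos h3]
    exact (main ε h1 h2).choose_spec.1
  · rw [Metric.tendstoUniformly_iff]
    intro ρ hρ
    obtain ⟨δ, hδd⟩ : ∃ δ, δ = ρ / (8 * S * α) := ⟨_, rfl⟩
    have hδ : 0 < δ := by rw [hδd]; positivity
    have hδe : S * (α * δ) = ρ / 8 := by rw [hδd]; field_simp
    have t1 : ∀ᶠ ε in 𝓝 (0:ℝ), |ε| < ε₀ := by
      have : Tendsto (fun ε : ℝ => |ε|) (𝓝 0) (𝓝 |(0:ℝ)|) := continuous_abs.tendsto 0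
      rw [abs_zero] at this
      exact this.eventually (gt_mem_nhds hε₀)
    have t2 : ∀ᶠ ε in 𝓝 (0:ℝ), S * (4 * |ε| * M δ) < ρ / 8 := by
      have : Tendsto (fun ε : ℝ => S * (4 * |ε| * M δ)) (𝓝 0) (𝓝 (S * (4 * |(0:ℝ)| * M δ))) :=
        Continuous.tendsto (by fun_prop) 0
      have h0 : S * (4 * |(0:ℝ)| * M δ) = 0 := by simp
      rw [h0] at this
      exact this.eventually (gt_mem_nhds (by positivity))
    filter_upwards [nhdsWithin_le_nhds t1, nhdsWithin_le_nhds t2, self_mem_nhdsWithin] with ε h1 h2 h3 θ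
    have h4 : 0 < |ε| ∧ |ε| < ε₀ := ⟨abs_pos.2 h3, h1⟩
    have h5 := (main ε h4.1 h4.2).choose_spec.2 δ hδ θ
    simp only [dif_pos h4, Pi.zero_apply, dist_zero_left, Real.norm_eq_abs]
    refine lt_of_le_of_lt h5 ?_
    rw [mul_add S, hδe]
    linarith
end

section
/- Let T be a finite rooted tree and let 𝔠(T) denote the set of chains of T, i.e. the connected components (under the parent relation) of the set V₁(T) of nodes with exactly one child. Then |𝔠(T)| ≤ |E(T)| + |V₂(T)|, where E(T) is the set of leaves and V₂(T) the set of nodes with at least two children. -/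
/-- A finite rooted tree: a finite set `N` of nodes with a distinguished root and a
parent map fixing the root, such that iterating the parent map from any node
eventually reaches the root. -/
structure FinRootedTree where
  N : Type
  [fintypeN : Fintype N]
  [decEqN : DecidableEq N]
  root : N
  parent : N → N
  parent_root : parent root = root
  reaches_root : ∀ v : N, ∃ n : ℕ, parent^[n] v = root

attribute [instance] FinRootedTree.fintypeN FinRootedTree.decEqN

namespace FinRootedTree

variable (T : FinRootedTree)

/-- The children of a node `v`: the non-root nodes whose parent is `v`. -/
def children (v : T.N) : Finset T.N :=
  Finset.univ.filter fun w => T.parent w = v ∧ w ≠ T.root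

/-- The leaves `E(T)`: nodes with no children. -/
def leaves : Finset T.N :=
  Finset.univ.filter fun v => T.children v = ∅

/-- The internal nodes `V(T)`: nodes with at least one child. -/
def internals : Finset T.N :=
  Finset.univ.filter fun v => T.children v ≠ ∅

/-- `V₁(T)`: nodes with exactly one child. -/
def V1 : Finset T.N :=
  Finset.univ.filter fun v => (T.children v).card = 1

/-- `V₂(T)`: nodes with at least two children. -/
def V2 : Finset T.N :=
  Finset.univ.filter fun v => 2 ≤ (T.children v).card

/-- The tops of the chains of `T`: each chain (maximal connected set of nodes of `V₁(T)`
under the parent relation) is uniquely represented by its highest node, namely the node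
of `V₁(T)` which is either the root or whose parent is not in `V₁(T)`.  Hence the number
of chains `|𝔠(T)|` equals the cardinality of this set. -/
def chainTops : Finset T.N :=
  T.V1.filter fun v => v = T.root ∨ T.parent v ∉ T.V1

end FinRootedTree

/-- In any finite rooted tree, the number of chains (connected components of `V₁(T)`
under the parent relation, counted via their top nodes) satisfies
`|𝔠(T)| ≤ |E(T)| + |V₂(T)|`. -/
theorem chains_le_leaves_add_V2 (T : FinRootedTree) :
    T.chainTops.card ≤ T.leaves.card + T.V2.card := by
  classical
  set A : Finset T.N :=
    Finset.univ.filter fun w => w ≠ T.root ∧ T.parent w ∈ T.V1 with hA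
  -- every node of `V1` is the parent of a node of `A`
  have h1 : T.V1.card ≤ A.card := by
    refine le_trans (Finset.card_le_card ?_) (Finset.card_image_le (s := A) (f := T.parent))
    intro v hv
    have hc : (T.children v).card = 1 := by
      simpa [FinRootedTree.V1] using hv
    obtain ⟨w, hw⟩ := Finset.card_eq_one.mp hc
    have hwc : w ∈ T.children v := by simp [hw]
    have hw2 : T.parent w = v ∧ w ≠ T.root := by
      simpa [FinRootedTree.children] using hwc
    refine Finset.mem_image.mpr ⟨w, ?_, hw2.1⟩
    rw [hA, Finset.mem_filter]
    exact ⟨Finset.mem_univ _, hw2.2, by rw [hw2.1]; exact hv⟩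
  -- the chain tops are disjoint from `A`
  have h2 : Disjoint T.chainTops A := by
    rw [Finset.disjoint_left]
    intro v hv hvA
    rw [FinRootedTree.chainTops, Finset.mem_filter] at hv
    rw [hA, Finset.mem_filter] at hvA
    rcases hv.2 with h | h
    · exact hvA.2.1 h
    · exact h hvA.2.2
  have h3 : T.chainTops.card + A.card ≤ (Finset.univ : Finset T.N).card := by
    rw [← Finset.card_union_of_disjoint h2]
    exact Finset.card_le_card (Finset.subset_univ _)
  have h4 : (Finset.univ : Finset T.N) ⊆ (T.leaves ∪ T.V2) ∪ T.V1 := by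
    intro v _
    simp only [FinRootedTree.leaves, FinRootedTree.V1, FinRootedTree.V2, Finset.mem_union,
      Finset.mem_filter, Finset.mem_univ, true_and, ← Finset.card_eq_zero]
    omega
  have h5 := Finset.card_le_card h4
  have h6 := Finset.card_union_le (T.leaves ∪ T.V2) T.V1
  have h7 := Finset.card_union_le T.leaves T.V2
  omega
end
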